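/- Let γ : [a,b] → ℝ³ be a minimal inspection curve parametrized with constant speed. Then its unfolding γ̃ : [a,b] → ℝ² is locally convex with respect to the origin o. -/

import Mathlib

open MeasureTheory Set Real
open scoped ENNReal NNReal RealInnerProductSpace

noncomputable section

abbrev E3 := EuclideanSpace ℝ (Fin 3)
abbrev E2 := EuclideanSpace ℝ (Fin 2)

/-- A closed rectifiable curve on `[a,b]` whose convex hull contains the unit sphere. -/
def IsInspection (a b : ℝ) (γ : ℝ → E3) : Prop :=
  a < b ∧ ContinuousOn γ (Set.Icc a b) ∧ γ a = γ b ∧ eVariationOn γ (Set.Icc a b) ≠ ⊤ ∧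
    Metric.sphere (0 : E3) 1 ⊆ convexHull ℝ (γ '' Set.Icc a b)

/-- A minimal inspection curve: an inspection curve of least length. -/
def IsMinimalInspection (a b : ℝ) (γ : ℝ → E3) : Prop :=
  IsInspection a b γ ∧
    ∀ (c d : ℝ) (β : ℝ → E3), IsInspection c d β →
      eVariationOn γ (Set.Icc a b) ≤ eVariationOn β (Set.Icc c d)

/-- The arclength of the radial (spherical) projection `γ/|γ|` over `[a,t]`. -/
def sphericalArc (a : ℝ) (γ : ℝ → E3) (t : ℝ) : ℝ :=
  (eVariationOn (fun s => ‖γ s‖⁻¹ • γ s) (Set.Icc a t)).toReal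

/-- The (cone) unfolding of a space curve: the planar curve with the same height and
the spherical arclength as polar angle. -/
def unfolding (a : ℝ) (γ : ℝ → E3) (t : ℝ) : E2 :=
  ‖γ t‖ • (WithLp.equiv 2 (Fin 2 → ℝ)).symm
    ![Real.cos (sphericalArc a γ t), Real.sin (sphericalArc a γ t)]

/-- A planar curve is locally convex with respect to the origin if it is locally
one-to-one, locally lies on boundaries of convex bodies, and through each of its points
there passes a local support line not through the origin such that locally the curve lies
in the closed half-plane bounded by that line which contains the origin. -/
def IsLocallyConvexWrtO (a b : ℝ) (β : ℝ → E2) : Prop :=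
  (∀ t ∈ Set.Icc a b, ∃ U ∈ nhdsWithin t (Set.Icc a b), Set.InjOn β U) ∧
  (∀ t ∈ Set.Icc a b, ∃ U ∈ nhdsWithin t (Set.Icc a b), ∃ K : Set E2,
    Convex ℝ K ∧ IsCompact K ∧ (interior K).Nonempty ∧ β '' U ⊆ frontier K) ∧
  (∀ t ∈ Set.Icc a b, ∃ u : E2, ∃ c : ℝ, 0 < c ∧ ⟪u, β t⟫ = c ∧
    ∃ U ∈ nhdsWithin t (Set.Icc a b), ∀ s ∈ U, ⟪u, β s⟫ ≤ c)

/-! The crux is that a minimal loop `Γ` avoids the origin. Call a direction seen from a point `x` if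
the plane tangent to the sphere there separates `x` from the sphere. Every direction comes into view
and goes out of view at least once as `x` runs along `Γ`, while AM-GM shows that each unit of length
changes the area of the seen directions by at most `2`; hence a loop has length at least `4 * π`. A
loop through the origin does strictly worse, because the lines through its first edges pass close to
the origin, from where nothing is seen; but the seam of a baseball is an inspection curve of length
exactly `4 * π`.

Comparing `Γ` with its outward dilations by tent functions shows that `‖Γ t‖ ^ 2 - t ^ 2` is
concave. This feeds the sharp form of the length bound, and it rules out radial arcs, so that the
unfolding has a strictly increasing polar angle. Finally, an arc of the unfolding lying on the inner
side of its chord may be replaced by that chord and folded back onto the cone over `Γ`. The result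
is an inspection curve, so the chord is no shorter than the arc. Hence the unfolding never bulges
inwards, which yields the support lines. -/

section Increments

variable {E : Type*} [PseudoMetricSpace E] {f : ℝ → E} {P Q : ℝ → ℝ} {s t u : ℝ} {S : Set ℝ}

/-- The chords of `f` over `S` are bounded by the increments of `P`. Then so are the lengths of its
arcs, which is how all the lengths below are estimated. -/
def IncrementsLeOn (f : ℝ → E) (P : ℝ → ℝ) (S : Set ℝ) : Prop :=
  ∀ ⦃x⦄, x ∈ S → ∀ ⦃y⦄, y ∈ S → x ≤ y → dist (f x) (f y) ≤ P y - P x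

namespace IncrementsLeOn

lemma mono {T : Set ℝ} (h : IncrementsLeOn f P S) (hT : T ⊆ S) : IncrementsLeOn f P T :=
  fun _ hx _ hy hxy => h (hT hx) (hT hy) hxy

lemma monotoneOn (h : IncrementsLeOn f P S) : MonotoneOn P S := fun _ hx _ hy hxy =>
  sub_nonneg.1 (dist_nonneg.trans (h hx hy hxy))

lemma of_local {δ : ℝ} (hδ : 0 < δ) (hS : S.OrdConnected)
    (h : ∀ x ∈ S, ∀ y ∈ S, x ≤ y → y - x ≤ δ → dist (f x) (f y) ≤ P y - P x) :
    IncrementsLeOn f P S := by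
  intro x hx y hy hxy
  obtain ⟨n, hn⟩ := exists_nat_ge ((y - x) / δ)
  rw [div_le_iff₀ hδ] at hn
  induction n generalizing x with
  | zero => exact h x hx y hy hxy (by simp only [Nat.cast_zero, zero_mul] at hn; linarith)
  | succ n ih =>
    push_cast at hn
    rcases le_total (y - x) δ with hc | hc
    · exact h x hx y hy hxy hc
    · have hm : x + δ ∈ S := hS.out hx hy ⟨by linarith, by linarith⟩
      calc dist (f x) (f y) ≤ dist (f x) (f (x + δ)) + dist (f (x + δ)) (f y) := dist_triangle _ _ _
        _ ≤ (P (x + δ) - P x) + (P y - P (x + δ)) :=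
          add_le_add (h x hx _ hm (by linarith) (by linarith))
            (ih hm (by linarith) (by linarith))
        _ = P y - P x := by ring

lemma eVariationOn_le (h : IncrementsLeOn f P (Icc s t)) (hst : s ≤ t) :
    eVariationOn f (Icc s t) ≤ ENNReal.ofReal (P t - P s) := by
  calc eVariationOn f (Icc s t) ≤ eVariationOn P (Icc s t) := by
        refine iSup_mono fun p => Finset.sum_le_sum fun i _ => ?_
        rw [edist_comm, edist_dist, edist_dist, dist_comm (P _), Real.dist_eq, abs_sub_comm]
        exact ENNReal.ofReal_le_ofReal
          ((h (p.2.2.2 i) (p.2.2.2 (i + 1)) (p.2.2.1 (Nat.le_succ i))).trans (le_abs_self _))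
    _ ≤ ENNReal.ofReal (P t - P s) := by
        simpa using (h.monotoneOn.eVariationOn_eq (left_mem_Icc.2 hst) (right_mem_Icc.2 hst)).le

lemma eVariationOn_le_add (h₁ : IncrementsLeOn f P (Icc s t)) (h₂ : IncrementsLeOn f Q (Icc t u))
    (hst : s ≤ t) (htu : t ≤ u) :
    eVariationOn f (Icc s u) ≤ ENNReal.ofReal ((P t - P s) + (Q u - Q t)) := by
  have glue := eVariationOn.Icc_add_Icc f (s := univ) hst htu (mem_univ t)
  simp only [univ_inter] at glue
  rw [← glue, ENNReal.ofReal_add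
    (sub_nonneg.2 (h₁.monotoneOn (left_mem_Icc.2 hst) (right_mem_Icc.2 hst) hst))
    (sub_nonneg.2 (h₂.monotoneOn (left_mem_Icc.2 htu) (right_mem_Icc.2 htu) htu))]
  exact add_le_add (h₁.eVariationOn_le hst) (h₂.eVariationOn_le htu)

end IncrementsLeOn

lemma lipschitzWith_iff_incrementsLeOn {K : ℝ≥0} :
    LipschitzWith K f ↔ IncrementsLeOn f (fun x => K * x) univ := by
  have increment {x y : ℝ} (hxy : x ≤ y) : K * dist x y = K * y - K * x := by
    rw [dist_comm, Real.dist_eq, abs_of_nonneg (sub_nonneg.2 hxy), mul_sub]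
  constructor
  · intro h x _ y _ hxy
    exact (h.dist_le_mul x y).trans_eq (increment hxy)
  · refine fun h => LipschitzWith.of_dist_le_mul fun x y => ?_
    rcases le_total x y with hxy | hxy
    · exact (h (mem_univ x) (mem_univ y) hxy).trans_eq (increment hxy).symm
    · rw [dist_comm, dist_comm x]
      exact (h (mem_univ y) (mem_univ x) hxy).trans_eq (increment hxy).symm

end Increments

section ConvexHull

variable {E : Type*} [NormedAddCommGroup E]

lemma exists_stdSimplex_sum_of_mem_convexHull [NormedSpace ℝ E] [FiniteDimensional ℝ E] {S : Set E}
    {x : E} (hx : x ∈ convexHull ℝ S) :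
    ∃ w ∈ stdSimplex ℝ (Fin (Module.finrank ℝ E + 1)), ∃ z : Fin (Module.finrank ℝ E + 1) → E,
      (∀ i, z i ∈ S) ∧ ∑ i, w i • z i = x := by
  obtain ⟨x₀, hx₀⟩ := convexHull_nonempty_iff.1 ⟨x, hx⟩
  obtain ⟨ι, _, z, w, hz, hind, hw, hw1, hwx⟩ := eq_pos_convex_span_of_mem_convexHull hx
  have hcard : Fintype.card ι ≤ Fintype.card (Fin (Module.finrank ℝ E + 1)) := by
    rw [Fintype.card_fin]
    exact hind.card_le_finrank_succ.trans (Nat.succ_le_succ (Submodule.finrank_le _))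
  obtain ⟨e⟩ := Function.Embedding.nonempty_of_card_le hcard
  have off (j) (hj : j ∉ range e) : Function.extend e w 0 j = 0 :=
    Function.extend_apply' _ _ _ hj
  refine ⟨Function.extend e w 0, ⟨fun j => ?_, ?_⟩, Function.extend e z fun _ => x₀,
    fun j => ?_, ?_⟩
  · by_cases hj : j ∈ range e
    · obtain ⟨i, rfl⟩ := hj
      rw [e.injective.extend_apply]
      exact (hw i).le
    · exact (off j hj).ge
  · rw [← hw1]
    refine (Fintype.sum_of_injective e e.injective _ _ off fun i => ?_).symm
    rw [e.injective.extend_apply]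
  · by_cases hj : j ∈ range e
    · obtain ⟨i, rfl⟩ := hj
      rw [e.injective.extend_apply]
      exact hz ⟨i, rfl⟩
    · rwa [Function.extend_apply' _ _ _ hj]
  · rw [← hwx]
    refine (Fintype.sum_of_injective e e.injective _ _ (fun j hj => ?_) fun i => ?_).symm
    · rw [off j hj, zero_smul]
    · rw [e.injective.extend_apply, e.injective.extend_apply]

lemma isCompact_convexHull [NormedSpace ℝ E] [FiniteDimensional ℝ E] {S : Set E}
    (hS : IsCompact S) : IsCompact (convexHull ℝ S) := by
  convert ((isCompact_stdSimplex ℝ (Fin (Module.finrank ℝ E + 1))).prod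
    (isCompact_univ_pi fun _ => hS)).image (f := fun q : (_ → ℝ) × (_ → E) => ∑ i, q.1 i • q.2 i)
    (by fun_prop) using 1
  refine Subset.antisymm (fun x hx => ?_) ?_
  · obtain ⟨w, hw, z, hz, rfl⟩ := exists_stdSimplex_sum_of_mem_convexHull hx
    exact ⟨(w, z), ⟨hw, fun i _ => hz i⟩, rfl⟩
  · rintro _ ⟨⟨w, z⟩, ⟨hw, hz⟩, rfl⟩
    exact (convex_convexHull ℝ S).sum_mem (fun i _ => hw.1 i) hw.2
      fun i _ => subset_convexHull ℝ S (hz i (mem_univ i))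

variable [InnerProductSpace ℝ E]

lemma exists_one_le_inner_of_sphere_subset_convexHull {S : Set E}
    (h : Metric.sphere (0 : E) 1 ⊆ convexHull ℝ S) {y : E} (hy : ‖y‖ = 1) :
    ∃ x ∈ S, 1 ≤ ⟪x, y⟫ := by
  by_contra! hn
  have below : convexHull ℝ S ⊆ {x : E | ⟪x, y⟫ < 1} := by
    refine convexHull_min hn ?_
    simp only [real_inner_comm y]
    exact convex_halfSpace_lt (innerSL ℝ y).toLinearMap.isLinear 1
  have : ⟪y, y⟫ < 1 := below (h (by simpa using hy))
  rw [real_inner_self_eq_norm_sq, hy] at this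
  norm_num at this

lemma sphere_subset_convexHull_of_one_le_inner [FiniteDimensional ℝ E] {S : Set E}
    (hS : IsCompact S) (h : ∀ y : E, ‖y‖ = 1 → ∃ x ∈ S, 1 ≤ ⟪x, y⟫) :
    Metric.sphere (0 : E) 1 ⊆ convexHull ℝ S := by
  intro z hz
  by_contra hn
  obtain ⟨f, c, hS_lt, hz_lt⟩ := geometric_hahn_banach_closed_point (convex_convexHull ℝ S)
    (isCompact_convexHull hS).isClosed hn
  obtain ⟨w, rfl⟩ := (InnerProductSpace.toDual ℝ E).surjective f
  simp only [InnerProductSpace.toDual_apply_apply] at hS_lt hz_lt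
  have hz1 : ‖z‖ = 1 := by simpa using hz
  have hwz : ⟪w, z⟫ ≤ ‖w‖ := by simpa [hz1] using real_inner_le_norm w z
  have hw0 : w ≠ 0 := by
    rintro rfl
    obtain ⟨x, hx, -⟩ := h z hz1
    have := hS_lt x (subset_convexHull ℝ S hx)
    rw [inner_zero_left] at this hz_lt
    linarith
  obtain ⟨x, hx, hx1⟩ := h (‖w‖⁻¹ • w) (norm_smul_inv_norm hw0)
  rw [inner_smul_right, real_inner_comm, inv_mul_eq_div, one_le_div (norm_pos_iff.2 hw0)] at hx1
  linarith [hS_lt x (subset_convexHull ℝ S hx)]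

end ConvexHull

/-- The arclength parametrization, extended periodically to `ℝ`, of an inspection curve of least
length `L`. The convex hull condition is expressed through the support function. -/
structure IsMinimalLoop (Γ : ℝ → E3) (L : ℝ) : Prop where
  pos : 0 < L
  periodic : Function.Periodic Γ L
  lipschitz : LipschitzWith 1 Γ
  support : ∀ y : E3, ‖y‖ = 1 → ∃ t, 1 ≤ ⟪Γ t, y⟫
  minimal : ∀ (c d : ℝ) (β : ℝ → E3), IsInspection c d β →
    ENNReal.ofReal L ≤ eVariationOn β (Icc c d)

namespace IsMinimalLoop

variable {Γ : ℝ → E3} {L : ℝ}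

lemma shift (h : IsMinimalLoop Γ L) (c : ℝ) : IsMinimalLoop (fun t => Γ (t + c)) L where
  pos := h.pos
  periodic t := by simpa only [add_right_comm] using h.periodic (t + c)
  lipschitz := LipschitzWith.of_dist_le_mul fun x y => by
    simpa only [dist_add_right] using h.lipschitz.dist_le_mul (x + c) (y + c)
  support y hy := by
    obtain ⟨t, ht⟩ := h.support y hy
    exact ⟨t - c, by simpa using ht⟩
  minimal := h.minimal

lemma reverse (h : IsMinimalLoop Γ L) : IsMinimalLoop (fun t => Γ (-t)) L where
  pos := h.pos
  periodic t := by simpa only [neg_add'] using h.periodic.sub_eq (-t)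
  lipschitz := LipschitzWith.of_dist_le_mul fun x y => by
    simpa only [dist_neg_neg] using h.lipschitz.dist_le_mul (-x) (-y)
  support y hy := by
    obtain ⟨t, ht⟩ := h.support y hy
    exact ⟨-t, by simpa using ht⟩
  minimal := h.minimal

lemma incrementsLeOn (h : IsMinimalLoop Γ L) (S : Set ℝ) : IncrementsLeOn Γ (fun t => t) S := by
  simpa using (lipschitzWith_iff_incrementsLeOn.1 h.lipschitz).mono (subset_univ S)

lemma dist_le (h : IsMinimalLoop Γ L) {x y : ℝ} (hxy : x ≤ y) : dist (Γ x) (Γ y) ≤ y - x :=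
  h.incrementsLeOn univ (mem_univ x) (mem_univ y) hxy

lemma exists_mem_Ico_eq (h : IsMinimalLoop Γ L) (s t : ℝ) : ∃ t' ∈ Ico s (s + L), Γ t = Γ t' :=
  h.periodic.exists_mem_Ico h.pos t s

lemma isInspection_splice (h : IsMinimalLoop Γ L) {s u : ℝ} (hsu : s ≤ u) (hu : u ≤ s + L)
    {β : ℝ → E3} (hβ : ContinuousOn β (Icc s u)) (hfin : eVariationOn β (Icc s u) ≠ ⊤)
    (hout : ∀ t ∈ Icc s u, ∃ l : ℝ, 1 ≤ l ∧ β t = l • Γ t)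
    (hs : β s = Γ s) (hu' : β u = Γ u) :
    ∃ B : ℝ → E3, IsInspection s (s + L) B ∧ EqOn B β (Icc s u) ∧ EqOn B Γ (Icc u (s + L)) := by
  let B : ℝ → E3 := (Iic u).piecewise β Γ
  have hB₁ : EqOn B β (Icc s u) := fun t ht => piecewise_eq_of_mem _ _ _ ht.2
  have hB₂ : EqOn B Γ (Icc u (s + L)) := by
    intro t ht
    rcases ht.1.eq_or_lt with rfl | hlt
    · rw [hB₁ (right_mem_Icc.2 hsu), hu']
    · exact piecewise_eq_of_notMem _ _ _ hlt.not_ge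
  have hcont : ContinuousOn B (Icc s (s + L)) := by
    rw [← Icc_union_Icc_eq_Icc hsu hu]
    exact (hβ.congr hB₁).union_of_isClosed (h.lipschitz.continuous.continuousOn.congr hB₂)
      isClosed_Icc isClosed_Icc
  have hlen : eVariationOn B (Icc s (s + L)) ≠ ⊤ := by
    have glue := eVariationOn.Icc_add_Icc B (s := univ) hsu hu (mem_univ u)
    simp only [univ_inter] at glue
    rw [← glue, eVariationOn.eq_of_eqOn hB₁, eVariationOn.eq_of_eqOn hB₂]
    exact ENNReal.add_ne_top.2 ⟨hfin, ne_top_of_le_ne_top ENNReal.ofReal_ne_top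
      ((h.incrementsLeOn _).eVariationOn_le hu)⟩
  refine ⟨B, ⟨lt_add_of_pos_right s h.pos, hcont, ?_, hlen, ?_⟩, hB₁, hB₂⟩
  · rw [hB₁ (left_mem_Icc.2 hsu), hB₂ (right_mem_Icc.2 hu), hs, h.periodic]
  · refine sphere_subset_convexHull_of_one_le_inner (isCompact_Icc.image_of_continuousOn hcont) ?_
    intro y hy
    obtain ⟨t₀, ht₀⟩ := h.support y hy
    obtain ⟨t, ht, hte⟩ := h.exists_mem_Ico_eq s t₀
    rw [hte] at ht₀
    refine ⟨B t, mem_image_of_mem B (Ico_subset_Icc_self ht), ?_⟩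
    rcases le_total t u with htu | htu
    · obtain ⟨l, hl, hβt⟩ := hout t ⟨ht.1, htu⟩
      rw [hB₁ ⟨ht.1, htu⟩, hβt, real_inner_smul_left]
      exact one_le_mul_of_one_le_of_one_le hl ht₀
    · rwa [hB₂ ⟨htu, ht.2.le⟩]

lemma ofReal_le_eVariationOn_of_outward (h : IsMinimalLoop Γ L) {s u : ℝ} (hsu : s ≤ u)
    (hu : u ≤ s + L) {β : ℝ → E3} (hβ : ContinuousOn β (Icc s u))
    (hout : ∀ t ∈ Icc s u, ∃ l : ℝ, 1 ≤ l ∧ β t = l • Γ t)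
    (hs : β s = Γ s) (hu' : β u = Γ u) :
    ENNReal.ofReal (u - s) ≤ eVariationOn β (Icc s u) := by
  rcases eq_or_ne (eVariationOn β (Icc s u)) ⊤ with hfin | hfin
  · rw [hfin]; exact le_top
  obtain ⟨B, hB, hB₁, hB₂⟩ := h.isInspection_splice hsu hu hβ hfin hout hs hu'
  have glue := eVariationOn.Icc_add_Icc B (s := univ) hsu hu (mem_univ u)
  simp only [univ_inter] at glue
  rw [eVariationOn.eq_of_eqOn hB₁, eVariationOn.eq_of_eqOn hB₂] at glue
  refine (ENNReal.add_le_add_iff_right (ENNReal.ofReal_ne_top (r := s + L - u))).1 ?_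
  calc ENNReal.ofReal (u - s) + ENNReal.ofReal (s + L - u) = ENNReal.ofReal L := by
        rw [← ENNReal.ofReal_add (by linarith) (by linarith)]
        ring_nf
    _ ≤ eVariationOn β (Icc s u) + eVariationOn Γ (Icc u (s + L)) :=
        (h.minimal _ _ _ hB).trans_eq glue.symm
    _ ≤ eVariationOn β (Icc s u) + ENNReal.ofReal (s + L - u) := by
        gcongr
        exact (h.incrementsLeOn _).eVariationOn_le hu

end IsMinimalLoop

lemma exists_sqrt_mul_cos_sin {x : ℝ} (hx : 0 ≤ x) (y : ℝ) : ∃ ω ∈ Icc (-(π / 2)) (π / 2),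
    √(x ^ 2 + y ^ 2) * cos ω = x ∧ √(x ^ 2 + y ^ 2) * sin ω = y := by
  have hnorm : ‖(⟨x, y⟩ : ℂ)‖ = √(x ^ 2 + y ^ 2) := by
    rw [Complex.norm_def, Complex.normSq_mk, ← sq, ← sq]
  exact ⟨Complex.arg ⟨x, y⟩, abs_le.1 (Complex.abs_arg_le_pi_div_two_iff.2 hx),
    by rw [← hnorm]; exact Complex.norm_mul_cos_arg _,
    by rw [← hnorm]; exact Complex.norm_mul_sin_arg _⟩

section Baseball

open Topology Asymptotics

/-- The seam of a baseball: four unit semicircles inscribed in the faces `x = ±1`, `y = ±1` of the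
cube. The signed squares `c * |c|` and `s * |s|` make one formula serve for all of them. -/
def baseball (u : ℝ) : E3 :=
  !₂[cos u * |cos u| + sin u * |sin u|, cos u * |cos u| - sin u * |sin u|, 2 * (sin u * cos u)]

lemma hasDerivAt_mul_abs (x : ℝ) : HasDerivAt (fun x : ℝ => x * |x|) (2 * |x|) x := by
  rcases eq_or_ne x 0 with rfl | hx
  · have : (fun x : ℝ => x * |x|) =o[𝓝 0] fun x => x * 1 :=
      (Asymptotics.isBigO_refl _ _).mul_isLittleO
        ((Asymptotics.isLittleO_one_iff ℝ).2 (by simpa using continuous_abs.tendsto (0 : ℝ)))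
    simpa [hasDerivAt_iff_isLittleO_nhds_zero] using this
  · refine ((hasDerivAt_id' x).mul (hasDerivAt_abs hx)).congr_deriv ?_
    rw [self_mul_sign]
    ring

lemma hasDerivAt_baseball (u : ℝ) : HasDerivAt baseball
    !₂[2 * (|sin u| * cos u - |cos u| * sin u), -2 * (|sin u| * cos u + |cos u| * sin u),
      2 * (cos u ^ 2 - sin u ^ 2)] u := by
  have hc := (hasDerivAt_mul_abs (cos u)).comp u (hasDerivAt_cos u)
  have hs := (hasDerivAt_mul_abs (sin u)).comp u (hasDerivAt_sin u)
  have hsc := ((hasDerivAt_sin u).mul (hasDerivAt_cos u)).const_mul 2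
  refine (PiLp.hasFDerivAt_toLp (𝕜 := ℝ) (E := fun _ : Fin 3 => ℝ) 2 _).comp_hasDerivAt u
    (hasDerivAt_pi.2 fun i => ?_)
  fin_cases i
  · exact (hc.add hs).congr_deriv (by simp; ring)
  · exact (hc.sub hs).congr_deriv (by simp; ring)
  · exact hsc.congr_deriv (by simp; ring)

lemma lipschitzWith_baseball : LipschitzWith 2 baseball := by
  refine lipschitzWith_of_nnnorm_deriv_le (fun u => (hasDerivAt_baseball u).differentiableAt)
    fun u => ?_
  rw [(hasDerivAt_baseball u).deriv, ← NNReal.coe_le_coe, coe_nnnorm, EuclideanSpace.norm_eq]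
  refine Real.sqrt_le_iff.2 ⟨by simp, le_of_eq ?_⟩
  simp only [Fin.sum_univ_three, Real.norm_eq_abs, sq_abs]
  simp
  linear_combination 8 * cos u ^ 2 * sq_abs (sin u) + 8 * sin u ^ 2 * sq_abs (cos u) +
    4 * (sin u ^ 2 + cos u ^ 2 + 1) * sin_sq_add_cos_sq u

lemma periodic_baseball : Function.Periodic baseball (2 * π) := fun u => by
  simp only [baseball, cos_add_two_pi, sin_add_two_pi]

lemma inner_baseball (u : ℝ) (y : E3) : ⟪baseball u, y⟫ =
    (cos u * |cos u| + sin u * |sin u|) * y 0 + (cos u * |cos u| - sin u * |sin u|) * y 1 +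
      2 * (sin u * cos u) * y 2 := by
  simp [baseball, PiLp.inner_apply, Fin.sum_univ_three, mul_comm]

/-- On the semicircle in the face `x = 1`, the support function is `p + √(q ^ 2 + z ^ 2)`. -/
lemma exists_one_le_baseball_quadrant {p q z : ℝ} (hp : 0 ≤ p) (hz : 0 ≤ z)
    (h : p ^ 2 + q ^ 2 + z ^ 2 = 1) : ∃ u : ℝ, 0 ≤ cos u ∧ 0 ≤ sin u ∧
      1 ≤ p + (cos u ^ 2 - sin u ^ 2) * q + 2 * (sin u * cos u) * z := by
  obtain ⟨ω, ⟨hω₁, hω₂⟩, hcos, hsin⟩ := exists_sqrt_mul_cos_sin hz q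
  have hpi := pi_pos
  refine ⟨π / 4 - ω / 2, cos_nonneg_of_neg_pi_div_two_le_of_le (by linarith) (by linarith),
    sin_nonneg_of_nonneg_of_le_pi (by linarith) (by linarith), ?_⟩
  have hdouble : 2 * (π / 4 - ω / 2) = π / 2 - ω := by ring
  rw [← cos_two_mul', ← mul_assoc, ← sin_two_mul, hdouble, cos_pi_div_two_sub, sin_pi_div_two_sub]
  set ρ := √(z ^ 2 + q ^ 2)
  have hρ0 : 0 ≤ ρ := Real.sqrt_nonneg _
  have hρ2 : ρ ^ 2 = z ^ 2 + q ^ 2 := Real.sq_sqrt (by positivity)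
  have value : sin ω * q + cos ω * z = ρ := by
    rw [← hcos, ← hsin]
    linear_combination ρ * sin_sq_add_cos_sq ω
  nlinarith [mul_nonneg hp hρ0]

lemma exists_one_le_inner_baseball {y : E3} (hy : ‖y‖ = 1) : ∃ u, 1 ≤ ⟪baseball u, y⟫ := by
  have hsum : y 0 ^ 2 + y 1 ^ 2 + y 2 ^ 2 = 1 := by
    have := EuclideanSpace.real_norm_sq_eq y
    rw [hy, Fin.sum_univ_three] at this
    linarith
  rcases le_total 0 (y 2) with h2 | h2
  · rcases le_total 0 (y 0) with h0 | h0
    · obtain ⟨u, hc, hs, hu⟩ := exists_one_le_baseball_quadrant h0 h2 hsum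
      refine ⟨u, hu.trans_eq ?_⟩
      rw [inner_baseball, abs_of_nonneg hc, abs_of_nonneg hs]
      linear_combination (-y 0) * sin_sq_add_cos_sq u
    · obtain ⟨u, hc, hs, hu⟩ := exists_one_le_baseball_quadrant (p := -y 0) (q := -y 1)
        (neg_nonneg.2 h0) h2 (by linarith)
      refine ⟨u + π, hu.trans_eq ?_⟩
      rw [inner_baseball, cos_add_pi, sin_add_pi, abs_neg, abs_neg, abs_of_nonneg hc,
        abs_of_nonneg hs]
      linear_combination y 0 * sin_sq_add_cos_sq u
  · rcases le_total 0 (y 1) with h1 | h1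
    · obtain ⟨u, hc, hs, hu⟩ := exists_one_le_baseball_quadrant (q := -y 0) h1
        (neg_nonneg.2 h2) (by linarith)
      refine ⟨u - π / 2, hu.trans_eq ?_⟩
      rw [inner_baseball, cos_sub_pi_div_two, sin_sub_pi_div_two, abs_neg, abs_of_nonneg hc,
        abs_of_nonneg hs]
      linear_combination (-y 1) * sin_sq_add_cos_sq u
    · obtain ⟨u, hc, hs, hu⟩ := exists_one_le_baseball_quadrant (q := y 0) (neg_nonneg.2 h1)
        (neg_nonneg.2 h2) (by linarith)
      refine ⟨u + π / 2, hu.trans_eq ?_⟩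
      rw [inner_baseball, cos_add_pi_div_two, sin_add_pi_div_two, abs_neg, abs_of_nonneg hc,
        abs_of_nonneg hs]
      linear_combination y 1 * sin_sq_add_cos_sq u

lemma IsMinimalLoop.length_le {Γ : ℝ → E3} {L : ℝ} (h : IsMinimalLoop Γ L) : L ≤ 4 * π := by
  have hlen : eVariationOn baseball (Icc 0 (2 * π)) ≤ ENNReal.ofReal (4 * π) := by
    have := ((lipschitzWith_iff_incrementsLeOn.1 lipschitzWith_baseball).mono
      (subset_univ (Icc 0 (2 * π)))).eVariationOn_le two_pi_pos.le
    convert this using 2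
    push_cast
    ring
  have hinsp : IsInspection 0 (2 * π) baseball := by
    refine ⟨two_pi_pos, lipschitzWith_baseball.continuous.continuousOn, ?_,
      ne_top_of_le_ne_top ENNReal.ofReal_ne_top hlen, sphere_subset_convexHull_of_one_le_inner
        (isCompact_Icc.image lipschitzWith_baseball.continuous) fun y hy => ?_⟩
    · simpa using (periodic_baseball 0).symm
    · obtain ⟨u, hu⟩ := exists_one_le_inner_baseball hy
      obtain ⟨v, hv, huv⟩ := periodic_baseball.exists_mem_Ico₀ two_pi_pos u
      exact ⟨baseball v, mem_image_of_mem _ (Ico_subset_Icc_self hv), huv ▸ hu⟩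
  exact (ENNReal.ofReal_le_ofReal_iff (by positivity)).1 ((h.minimal _ _ _ hinsp).trans hlen)

end Baseball

section Dilation

variable {E : Type*} [NormedAddCommGroup E] [InnerProductSpace ℝ E]

lemma norm_smul_sub_smul_sq (a b : ℝ) (x y : E) :
    ‖a • x - b • y‖ ^ 2 = a * b * ‖x - y‖ ^ 2 + (b - a) * (b * ‖y‖ ^ 2 - a * ‖x‖ ^ 2) := by
  rw [norm_sub_sq_real, norm_sub_sq_real, norm_smul, norm_smul, real_inner_smul_left,
    real_inner_smul_right, mul_pow, mul_pow, Real.norm_eq_abs, Real.norm_eq_abs, sq_abs, sq_abs]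
  ring

/-- A bound for the arclength of `(1 + ε w) • f` up to time `z`, when `w` is affine with slope `k`.
It is exact to first order in `ε` where `f` has unit speed. -/
def dilatedLength (f : ℝ → E) (w : ℝ → ℝ) (ε k z : ℝ) : ℝ :=
  ((2 + ε ^ 2) * z + ε * (w z ^ 2 / k) + ε * k * ((1 + ε * w z) * ‖f z‖ ^ 2)) / 2

lemma incrementsLeOn_dilatedLength {f : ℝ → E} {w : ℝ → ℝ} {S : Set ℝ} {ε k : ℝ}
    (hf : IncrementsLeOn f (fun t => t) S) (hε : 0 ≤ ε) (hk : k ≠ 0)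
    (hslope : ∀ x ∈ S, ∀ y ∈ S, w y - w x = k * (y - x)) (hw : MapsTo w S (Icc 0 1)) :
    IncrementsLeOn (fun x => (1 + ε * w x) • f x) (dilatedLength f w ε k) S := by
  intro x hx y hy hxy
  rcases hxy.eq_or_lt with rfl | hlt
  · simp
  obtain ⟨⟨hwx, hwx'⟩, ⟨hwy, hwy'⟩⟩ := And.intro (hw hx) (hw hy)
  have hwk := hslope x hx y hy
  set D := dist ((1 + ε * w x) • f x) ((1 + ε * w y) • f y) with hD
  have hΔ : 0 < y - x := sub_pos.2 hlt
  have hchord : ‖f x - f y‖ ^ 2 ≤ (y - x) ^ 2 := by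
    rw [← dist_eq_norm]
    exact pow_le_pow_left₀ dist_nonneg (hf hx hy hxy) 2
  have hfactor : (1 + ε * w x) * (1 + ε * w y) ≤ 1 + ε * (w x + w y) + ε ^ 2 := by
    nlinarith [mul_le_one₀ hwx' hwy hwy', sq_nonneg ε]
  have hD2 : D ^ 2 ≤ (1 + ε * (w x + w y) + ε ^ 2) * (y - x) ^ 2 + ε * k * (y - x) *
      ((1 + ε * w y) * ‖f y‖ ^ 2 - (1 + ε * w x) * ‖f x‖ ^ 2) := by
    rw [hD, dist_eq_norm, norm_smul_sub_smul_sq,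
      show 1 + ε * w y - (1 + ε * w x) = ε * k * (y - x) by linear_combination ε * hwk]
    gcongr
  have hsum : (w x + w y) * (y - x) = w y ^ 2 / k - w x ^ 2 / k := by
    field_simp
    linear_combination (-(w x + w y)) * hwk
  have amgm : 2 * D * (y - x) ≤ D ^ 2 + (y - x) ^ 2 := two_mul_le_add_sq D (y - x)
  refine le_of_mul_le_mul_right ?_ hΔ
  have hring : (dilatedLength f w ε k y - dilatedLength f w ε k x) * (y - x) =
      ((1 + ε * (w x + w y) + ε ^ 2) * (y - x) ^ 2 + ε * k * (y - x) *
        ((1 + ε * w y) * ‖f y‖ ^ 2 - (1 + ε * w x) * ‖f x‖ ^ 2) + (y - x) ^ 2) / 2 := by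
    unfold dilatedLength
    linear_combination (-(ε * (y - x)) / 2) * hsum
  linarith

end Dilation

section Tent

variable {s t u : ℝ}

/-- The piecewise affine function equal to `1` at `t` and vanishing at `s` and `u`. -/
def tent (s t u x : ℝ) : ℝ := min ((x - s) / (t - s)) ((u - x) / (u - t))

lemma continuous_tent (s t u : ℝ) : Continuous (tent s t u) := by
  unfold tent
  fun_prop

lemma tent_of_le (hst : s < t) (htu : t < u) {x : ℝ} (hx : x ≤ t) :
    tent s t u x = (x - s) / (t - s) := by
  refine min_eq_left (le_trans (b := 1) ?_ ?_)
  · rw [div_le_one (by linarith)]; linarith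
  · rw [one_le_div (by linarith)]; linarith

lemma tent_of_ge (hst : s < t) (htu : t < u) {x : ℝ} (hx : t ≤ x) :
    tent s t u x = (u - x) / (u - t) := by
  refine min_eq_right (le_trans (b := 1) ?_ ?_)
  · rw [div_le_one (by linarith)]; linarith
  · rw [one_le_div (by linarith)]; linarith

lemma tent_mem_Icc (hst : s < t) (htu : t < u) {x : ℝ} (hx : x ∈ Icc s u) :
    tent s t u x ∈ Icc 0 1 := by
  refine ⟨le_min (div_nonneg ?_ ?_) (div_nonneg ?_ ?_), ?_⟩
  all_goals try linarith [hx.1, hx.2]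
  rcases le_total x t with h | h
  · rw [tent_of_le hst htu h, div_le_one (by linarith)]; linarith
  · rw [tent_of_ge hst htu h, div_le_one (by linarith)]; linarith

end Tent

namespace IsMinimalLoop

variable {Γ : ℝ → E3} {L : ℝ}

lemma le_of_outward_of_incrementsLeOn (h : IsMinimalLoop Γ L) {s t u : ℝ} (hst : s ≤ t)
    (htu : t ≤ u) (hu : u ≤ s + L) {β : ℝ → E3} {P Q : ℝ → ℝ} (hβ : ContinuousOn β (Icc s u))
    (hout : ∀ x ∈ Icc s u, ∃ l : ℝ, 1 ≤ l ∧ β x = l • Γ x) (hs : β s = Γ s) (hu' : β u = Γ u)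
    (hP : IncrementsLeOn β P (Icc s t)) (hQ : IncrementsLeOn β Q (Icc t u)) :
    u - s ≤ (P t - P s) + (Q u - Q t) := by
  refine (ENNReal.ofReal_le_ofReal_iff (add_nonneg ?_ ?_)).1
    ((h.ofReal_le_eVariationOn_of_outward (hst.trans htu) hu hβ hout hs hu').trans
      (hP.eVariationOn_le_add hQ hst htu))
  · exact sub_nonneg.2 (hP.monotoneOn (left_mem_Icc.2 hst) (right_mem_Icc.2 hst) hst)
  · exact sub_nonneg.2 (hQ.monotoneOn (left_mem_Icc.2 htu) (right_mem_Icc.2 htu) htu)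

lemma le_dilatedLength_tent (h : IsMinimalLoop Γ L) {s t u ε : ℝ} (hst : s < t) (htu : t < u)
    (hu : u ≤ s + L) (hε : 0 ≤ ε) :
    u - s ≤
      (dilatedLength Γ (tent s t u) ε (1 / (t - s)) t -
        dilatedLength Γ (tent s t u) ε (1 / (t - s)) s) +
      (dilatedLength Γ (tent s t u) ε (-1 / (u - t)) u -
        dilatedLength Γ (tent s t u) ε (-1 / (u - t)) t) := by
  have hA : t - s ≠ 0 := (sub_pos.2 hst).ne'
  have hB : u - t ≠ 0 := (sub_pos.2 htu).ne'
  have tent_mem {x : ℝ} (hx : x ∈ Icc s u) := tent_mem_Icc hst htu hx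
  refine h.le_of_outward_of_incrementsLeOn hst.le htu.le hu
    (β := fun x => (1 + ε * tent s t u x) • Γ x) ?_ (fun x hx => ⟨_, ?_, rfl⟩) ?_ ?_
    (incrementsLeOn_dilatedLength (h.incrementsLeOn _) hε (one_div_ne_zero hA) ?_
      fun x hx => tent_mem ⟨hx.1, hx.2.trans htu.le⟩)
    (incrementsLeOn_dilatedLength (h.incrementsLeOn _) hε (div_ne_zero (by norm_num) hB) ?_
      fun x hx => tent_mem ⟨hst.le.trans hx.1, hx.2⟩)
  · have := h.lipschitz.continuous
    have := continuous_tent s t u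
    fun_prop
  · exact le_add_of_nonneg_right (mul_nonneg hε (tent_mem hx).1)
  · simp [tent_of_le hst htu hst.le]
  · simp [tent_of_ge hst htu htu.le]
  · intro x hx y hy
    rw [tent_of_le hst htu hx.2, tent_of_le hst htu hy.2]
    ring
  · intro x hx y hy
    rw [tent_of_ge hst htu hx.1, tent_of_ge hst htu hy.1]
    ring

/-- The first variation of length under dilation by `1 + ε w`, with `w` a tent function. -/
lemma concaveOn_norm_sq_sub_sq (h : IsMinimalLoop Γ L) (a : ℝ) :
    ConcaveOn ℝ (Icc a (a + L)) fun t => ‖Γ t‖ ^ 2 - t ^ 2 := by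
  refine concaveOn_of_slope_anti_adjacent (convex_Icc _ _) fun {s t u} hs hu hst htu => ?_
  have _ : 0 < t - s := sub_pos.2 hst
  have _ : 0 < u - t := sub_pos.2 htu
  set X := (‖Γ t‖ ^ 2 - t ^ 2 - (‖Γ s‖ ^ 2 - s ^ 2)) / (t - s) -
    (‖Γ u‖ ^ 2 - u ^ 2 - (‖Γ t‖ ^ 2 - t ^ 2)) / (u - t) with hX
  set Y := (u - s) + ‖Γ t‖ ^ 2 / (t - s) + ‖Γ t‖ ^ 2 / (u - t) with hY
  suffices 0 ≤ X from sub_nonneg.1 this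
  have expansion {ε : ℝ} (hε : 0 < ε) : 0 ≤ X + ε * Y := by
    have := h.le_dilatedLength_tent hst htu (by linarith [hs.1, hu.2]) hε.le
    have rise : dilatedLength Γ (tent s t u) ε (1 / (t - s)) t -
        dilatedLength Γ (tent s t u) ε (1 / (t - s)) s =
        ((2 + ε ^ 2) * (t - s) + ε * (t - s) +
          ε / (t - s) * ((1 + ε) * ‖Γ t‖ ^ 2 - ‖Γ s‖ ^ 2)) / 2 := by
      rw [dilatedLength, dilatedLength, tent_of_le hst htu le_rfl, tent_of_le hst htu hst.le]
      field_simp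
      ring
    have fall : dilatedLength Γ (tent s t u) ε (-1 / (u - t)) u -
        dilatedLength Γ (tent s t u) ε (-1 / (u - t)) t =
        ((2 + ε ^ 2) * (u - t) + ε * (u - t) -
          ε / (u - t) * (‖Γ u‖ ^ 2 - (1 + ε) * ‖Γ t‖ ^ 2)) / 2 := by
      rw [dilatedLength, dilatedLength, tent_of_ge hst htu le_rfl, tent_of_ge hst htu htu.le]
      field_simp
      ring
    rw [rise, fall] at this
    refine nonneg_of_mul_nonneg_right (b := X + ε * Y) ?_ hε
    have expand : ε * (X + ε * Y) =
        ((2 + ε ^ 2) * (t - s) + ε * (t - s) +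
          ε / (t - s) * ((1 + ε) * ‖Γ t‖ ^ 2 - ‖Γ s‖ ^ 2)) +
        ((2 + ε ^ 2) * (u - t) + ε * (u - t) -
          ε / (u - t) * (‖Γ u‖ ^ 2 - (1 + ε) * ‖Γ t‖ ^ 2)) - 2 * (u - s) := by
      rw [hX, hY]
      field_simp
      ring
    linarith
  have hlim : Filter.Tendsto (fun ε => X + ε * Y) (nhdsWithin 0 (Ioi 0)) (nhds X) := by
    refine (Continuous.tendsto' (by fun_prop) 0 X (by simp)).mono_left nhdsWithin_le_nhds
  exact ge_of_tendsto hlim (eventually_nhdsWithin_of_forall fun ε hε => expansion hε)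

lemma second_difference_norm_sq_le (h : IsMinimalLoop Γ L) (t : ℝ) {e : ℝ} (he : 0 < e)
    (hL : 2 * e ≤ L) : ‖Γ (t + 2 * e)‖ ^ 2 - 2 * ‖Γ (t + e)‖ ^ 2 + ‖Γ t‖ ^ 2 ≤ 2 * e ^ 2 := by
  have := (h.concaveOn_norm_sq_sub_sq t).slope_anti_adjacent (x := t) (y := t + e) (z := t + 2 * e)
    (left_mem_Icc.2 (by linarith)) ⟨by linarith, by linarith⟩ (by linarith) (by linarith)
  rw [show t + 2 * e - (t + e) = e by ring, show t + e - t = e by ring,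
    div_le_div_iff_of_pos_right he] at this
  linarith

end IsMinimalLoop

/-- A direction `z` counts as seen from `x` when `1 < ⟪x, z / ‖z‖⟫`. Each seen direction is recorded
by the whole segment from the origin in the unit ball, so that areas on the sphere become volumes
and cylindrical coordinates can be used. -/
def viewCone (x : E3) : Set E3 := Metric.ball 0 1 ∩ {z | ‖z‖ < ⟪x, z⟫}

/-- The rate at which the volume of the view cone of `x` changes, per unit of displacement of `x`
along a line at distance `√q` from the origin. Since `√` vanishes on negative numbers, it is zero
for `q ≤ 1`. -/
def sightDensity (q : ℝ) : ℝ := 4 / 3 * √(q - 1) / q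

lemma sightDensity_of_le_one {q : ℝ} (hq : q ≤ 1) : sightDensity q = 0 := by
  simp [sightDensity, Real.sqrt_eq_zero_of_nonpos (sub_nonpos.2 hq)]

lemma sightDensity_nonneg (q : ℝ) : 0 ≤ sightDensity q := by
  rcases le_total q 1 with hq | hq
  · exact (sightDensity_of_le_one hq).ge
  · unfold sightDensity; positivity

lemma sightDensity_le (q : ℝ) : sightDensity q ≤ 2 / 3 := by
  rcases le_total q 1 with hq | hq
  · rw [sightDensity_of_le_one hq]; norm_num
  · have amgm : 2 * √(q - 1) ≤ q := by
      nlinarith [sq_nonneg (√(q - 1) - 1), Real.sq_sqrt (sub_nonneg.2 hq)]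
    rw [sightDensity, div_le_iff₀ (by linarith)]
    linarith

lemma continuous_sightDensity : Continuous sightDensity := by
  refine continuous_iff_continuousAt.2 fun q => ?_
  rcases lt_or_ge q 1 with hq | hq
  · refine (continuousAt_const (y := (0 : ℝ))).congr ?_
    filter_upwards [Iio_mem_nhds hq] with p hp using (sightDensity_of_le_one hp.le).symm
  · exact ContinuousAt.div (by fun_prop) continuousAt_id (by positivity)

lemma setLIntegral_eq_of_subset_of_eq_zero {α : Type*} [MeasurableSpace α] {μ : Measure α}
    {s t : Set α} {f : α → ℝ≥0∞} (hs : MeasurableSet s) (ht : MeasurableSet t) (hst : s ⊆ t)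
    (hf : ∀ x ∈ t \ s, f x = 0) : ∫⁻ x in t, f x ∂μ = ∫⁻ x in s, f x ∂μ := by
  rw [← lintegral_inter_add_sdiff f t hs, inter_eq_right.2 hst,
    setLIntegral_eq_zero (ht.diff hs) hf, add_zero]

lemma setLIntegral_Ioo_ofReal_id {α β : ℝ} (hα : 0 ≤ α) (hβ : 0 ≤ β) :
    ∫⁻ ρ in Ioo α β, ENNReal.ofReal ρ = ENNReal.ofReal ((β ^ 2 - α ^ 2) / 2) := by
  rcases le_total α β with h | h
  · rw [← integral_id, intervalIntegral.integral_of_le h, ofReal_integral_eq_lintegral_ofReal,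
      setLIntegral_congr Ioo_ae_eq_Ioc]
    · exact intervalIntegral.intervalIntegrable_id.1
    · filter_upwards [ae_restrict_mem measurableSet_Ioc] with ρ hρ using hα.trans hρ.1.le
  · rw [Ioo_eq_empty h.not_gt, Measure.restrict_empty, lintegral_zero_measure,
      ENNReal.ofReal_of_nonpos]
    nlinarith

lemma lintegral_ofReal_one_sub_sq_div {a : ℝ} (ha : 0 < a) :
    ∫⁻ ζ : ℝ, ENNReal.ofReal ((1 - ζ ^ 2 / a ^ 2) / 2) = ENNReal.ofReal (2 * a / 3) := by
  have nonneg_iff (ζ : ℝ) : 0 ≤ (1 - ζ ^ 2 / a ^ 2) / 2 ↔ ζ ∈ Icc (-a) a := by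
    rw [mem_Icc, ← abs_le, ← sq_le_sq₀ (abs_nonneg ζ) ha.le, sq_abs,
      ← div_le_one (by positivity : 0 < a ^ 2)]
    constructor <;> intro <;> linarith
  have supp : (fun ζ : ℝ => ENNReal.ofReal ((1 - ζ ^ 2 / a ^ 2) / 2)) =
      (Icc (-a) a).indicator fun ζ => ENNReal.ofReal ((1 - ζ ^ 2 / a ^ 2) / 2) := by
    refine (indicator_eq_self.2 fun ζ hζ => (nonneg_iff ζ).1 ?_).symm
    by_contra! h
    exact hζ (ENNReal.ofReal_of_nonpos h.le)
  have value : ∫ ζ in -a..a, (1 - ζ ^ 2 / a ^ 2) / 2 = 2 * a / 3 := by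
    rw [intervalIntegral.integral_div, intervalIntegral.integral_sub (by simp)
      (Continuous.intervalIntegrable (by fun_prop) _ _), intervalIntegral.integral_div,
      integral_pow]
    simp
    field_simp
    ring
  rw [supp, lintegral_indicator measurableSet_Icc, ← value,
    intervalIntegral.integral_of_le (by linarith), ← integral_Icc_eq_integral_Ioc,
    ofReal_integral_eq_lintegral_ofReal]
  · exact (Continuous.continuousOn (by fun_prop)).integrableOn_Icc
  · filter_upwards [ae_restrict_mem measurableSet_Icc] with ζ hζ using (nonneg_iff ζ).2 hζ

lemma lt_mul_sqrt_iff {k ρ ζ : ℝ} (hk : 1 < k) (hρ : 0 < ρ) :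
    √(ρ ^ 2 + ζ ^ 2) < k * ρ ↔ |ζ| / √(k ^ 2 - 1) < ρ := by
  have hc : 0 < k ^ 2 - 1 := by nlinarith
  rw [Real.sqrt_lt' (by positivity), div_lt_iff₀ (Real.sqrt_pos.2 hc),
    ← sq_lt_sq₀ (abs_nonneg ζ) (by positivity), sq_abs, mul_pow, mul_pow, Real.sq_sqrt hc.le]
  constructor <;> intro <;> linarith

lemma lintegral_meridian_section (k : ℝ) :
    ∫⁻ ζ : ℝ, ∫⁻ ρ in {ρ : ℝ | 0 < ρ ∧ ρ ^ 2 + ζ ^ 2 < 1 ∧ √(ρ ^ 2 + ζ ^ 2) < k * ρ},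
      ENNReal.ofReal ρ = ENNReal.ofReal (sightDensity (k ^ 2) * k / 2) := by
  rcases le_or_gt k 1 with hk | hk
  · have empty_section (ζ : ℝ) :
        {ρ : ℝ | 0 < ρ ∧ ρ ^ 2 + ζ ^ 2 < 1 ∧ √(ρ ^ 2 + ζ ^ 2) < k * ρ} = ∅ := by
      refine eq_empty_of_forall_notMem fun ρ ⟨hρ, _, h⟩ => h.not_ge ?_
      exact (mul_le_of_le_one_left hρ.le hk).trans (Real.le_sqrt_of_sq_le (by nlinarith))
    have value_nonpos : sightDensity (k ^ 2) * k / 2 ≤ 0 := by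
      rcases le_total k 0 with h | h
      · linarith [mul_nonpos_of_nonneg_of_nonpos (sightDensity_nonneg (k ^ 2)) h]
      · rw [sightDensity_of_le_one (by nlinarith)]; simp
    simp [empty_section, ENNReal.ofReal_of_nonpos value_nonpos]
  · have section_eq (ζ : ℝ) : {ρ : ℝ | 0 < ρ ∧ ρ ^ 2 + ζ ^ 2 < 1 ∧ √(ρ ^ 2 + ζ ^ 2) < k * ρ} =
        Ioo (|ζ| / √(k ^ 2 - 1)) √(1 - ζ ^ 2) := by
      ext ρ
      constructor
      · rintro ⟨hρ, h1, h⟩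
        exact ⟨(lt_mul_sqrt_iff hk hρ).1 h, Real.lt_sqrt_of_sq_lt (by linarith)⟩
      · rintro ⟨h, h1⟩
        have hρ : 0 < ρ := (by positivity : 0 ≤ |ζ| / √(k ^ 2 - 1)).trans_lt h
        exact ⟨hρ, by linarith [(Real.lt_sqrt hρ.le).1 h1], (lt_mul_sqrt_iff hk hρ).2 h⟩
    have hc : 0 < k ^ 2 - 1 := by nlinarith
    have inner (ζ : ℝ) : ∫⁻ ρ in Ioo (|ζ| / √(k ^ 2 - 1)) √(1 - ζ ^ 2), ENNReal.ofReal ρ =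
        ENNReal.ofReal ((1 - ζ ^ 2 / (√(k ^ 2 - 1) / k) ^ 2) / 2) := by
      have coeff : 1 - ζ ^ 2 / (√(k ^ 2 - 1) / k) ^ 2 = 1 - ζ ^ 2 - (|ζ| / √(k ^ 2 - 1)) ^ 2 := by
        rw [div_pow, div_pow, Real.sq_sqrt hc.le, sq_abs]
        field_simp
        ring
      rw [setLIntegral_Ioo_ofReal_id (by positivity) (by positivity), coeff]
      rcases le_total (ζ ^ 2) 1 with hζ | hζ
      · rw [Real.sq_sqrt (by linarith)]
      · rw [Real.sqrt_eq_zero_of_nonpos (by linarith), ENNReal.ofReal_of_nonpos,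
          ENNReal.ofReal_of_nonpos] <;> nlinarith [sq_nonneg (|ζ| / √(k ^ 2 - 1))]
    simp only [section_eq, inner]
    rw [lintegral_ofReal_one_sub_sq_div (by positivity), sightDensity]
    congr 1
    field_simp
    ring

lemma volume_eq_lintegral_polar {A : Set (ℝ × ℝ)} (hA : MeasurableSet A) :
    volume A = ∫⁻ φ in Ioo (-π) π, ∫⁻ ρ in {ρ | 0 < ρ ∧ (ρ * cos φ, ρ * sin φ) ∈ A},
      ENNReal.ofReal ρ := by
  have polar_meas : Measurable fun p : ℝ × ℝ => (p.1 * cos p.2, p.1 * sin p.2) := by fun_prop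
  rw [← lintegral_indicator_one hA, ← lintegral_comp_polarCoord_symm, polarCoord_target,
    Measure.volume_eq_prod, setLIntegral_prod_symm]
  · refine lintegral_congr fun φ => ?_
    have section_meas : MeasurableSet {ρ | (ρ * cos φ, ρ * sin φ) ∈ A} :=
      (polar_meas.comp measurable_prodMk_right) hA
    rw [show {ρ | 0 < ρ ∧ (ρ * cos φ, ρ * sin φ) ∈ A} =
      {ρ | (ρ * cos φ, ρ * sin φ) ∈ A} ∩ Ioi 0 from inter_comm _ _,
      ← setLIntegral_indicator section_meas]
    refine lintegral_congr fun ρ => ?_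
    by_cases h : (ρ * cos φ, ρ * sin φ) ∈ A <;> simp [polarCoord_symm_apply, h]
  · refine (Measurable.mul (by fun_prop) ?_).aemeasurable
    exact (measurable_one.indicator hA).comp polar_meas

lemma volume_eq_lintegral_cylindrical {S : Set (ℝ × ℝ × ℝ)} (hS : MeasurableSet S) :
    volume {y : E3 | (y 0, y 1, y 2) ∈ S} = ∫⁻ φ in Ioo (-π) π, ∫⁻ ζ,
      ∫⁻ ρ in {ρ | 0 < ρ ∧ (ρ * cos φ, ρ * sin φ, ζ) ∈ S}, ENNReal.ofReal ρ := by
  have axis_split : MeasurePreserving fun y : E3 => (y 2, y 0, y 1) :=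
    ((MeasurePreserving.id volume).prod (volume_preserving_finTwoArrow ℝ)).comp
      ((volume_preserving_piFinSuccAbove (fun _ : Fin 3 => ℝ) 2).comp
        (PiLp.volume_preserving_ofLp (Fin 3)))
  set T : Set (ℝ × ℝ × ℝ) := {p | (p.2.1, p.2.2, p.1) ∈ S}
  have hT : MeasurableSet T := (by fun_prop : Measurable fun p : ℝ × ℝ × ℝ =>
    (p.2.1, p.2.2, p.1)) hS
  have joint_meas : MeasurableSet {q : (ℝ × ℝ) × ℝ |
      0 < q.2 ∧ (q.2 * cos q.1.2, q.2 * sin q.1.2, q.1.1) ∈ S} :=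
    (measurableSet_lt measurable_const measurable_snd).inter
      ((by fun_prop : Measurable fun q : (ℝ × ℝ) × ℝ =>
        (q.2 * cos q.1.2, q.2 * sin q.1.2, q.1.1)) hS)
  calc volume {y : E3 | (y 0, y 1, y 2) ∈ S} = volume T :=
        axis_split.measure_preimage hT.nullMeasurableSet
    _ = ∫⁻ ζ, ∫⁻ φ in Ioo (-π) π,
          ∫⁻ ρ in {ρ | 0 < ρ ∧ (ρ * cos φ, ρ * sin φ, ζ) ∈ S}, ENNReal.ofReal ρ := by
        rw [Measure.volume_eq_prod, Measure.prod_apply hT]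
        exact lintegral_congr fun ζ =>
          volume_eq_lintegral_polar (hT.preimage measurable_prodMk_left)
    _ = _ := by
        refine lintegral_lintegral_swap (Measurable.aemeasurable ?_)
        have : Measurable fun p : ℝ × ℝ => ∫⁻ ρ, {q : (ℝ × ℝ) × ℝ |
          0 < q.2 ∧ (q.2 * cos q.1.2, q.2 * sin q.1.2, q.1.1) ∈ S}.indicator
            (fun q => ENNReal.ofReal q.2) (p, ρ) :=
          ((by fun_prop : Measurable fun q : (ℝ × ℝ) × ℝ => ENNReal.ofReal q.2).indicator
            joint_meas).lintegral_prod_right'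
        convert this using 2 with p
        exact (lintegral_indicator (joint_meas.preimage measurable_prodMk_left) _).symm

lemma exists_unit_smul_norm_eq {E : Type*} [NormedAddCommGroup E] [NormedSpace ℝ E] [Nontrivial E]
    (p : E) : ∃ u : E, ‖u‖ = 1 ∧ ‖p‖ • u = p := by
  rcases eq_or_ne p 0 with rfl | hp
  · obtain ⟨u, hu⟩ := exists_norm_eq E zero_le_one
    exact ⟨u, hu, by simp⟩
  · exact ⟨‖p‖⁻¹ • p, by simp [norm_smul, hp], smul_inv_smul₀ (norm_ne_zero_iff.2 hp) p⟩

lemma exists_orthonormalBasis_span_pair (x v : E3) (hv : ‖v‖ = 1) :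
    ∃ b : OrthonormalBasis (Fin 3) ℝ E3, b 1 = v ∧ ∃ h : ℝ, 0 ≤ h ∧ x = h • b 0 + ⟪x, v⟫ • v := by
  have hv0 : v ≠ 0 := norm_ne_zero_iff.1 (by simp [hv])
  have : Fact (Module.finrank ℝ E3 = 2 + 1) := ⟨by simp⟩
  have : Nontrivial (ℝ ∙ v)ᗮ := Module.nontrivial_of_finrank_pos (R := ℝ)
    (by rw [Submodule.finrank_orthogonal_span_singleton (n := 2) hv0]; norm_num)
  have normal_part : x - ⟪x, v⟫ • v ∈ (ℝ ∙ v)ᗮ := by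
    rw [Submodule.mem_orthogonal_singleton_iff_inner_left, inner_sub_left, real_inner_smul_left,
      real_inner_self_eq_norm_sq, hv]
    ring
  obtain ⟨u, hu, hux⟩ := exists_unit_smul_norm_eq (⟨_, normal_part⟩ : (ℝ ∙ v)ᗮ)
  have huv : ⟪(u : E3), v⟫ = 0 := Submodule.mem_orthogonal_singleton_iff_inner_left.1 u.2
  have pair : Orthonormal ℝ (({0, 1} : Set (Fin 3)).domRestrict ![(u : E3), v, 0]) := by
    refine ⟨?_, ?_⟩
    · rintro ⟨i, rfl | rfl⟩
      exacts [hu, hv]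
    · rintro ⟨i, rfl | rfl⟩ ⟨j, rfl | rfl⟩ hij
      exacts [(hij rfl).elim, huv, (real_inner_comm _ _).trans huv, (hij rfl).elim]
  obtain ⟨b, hb⟩ := pair.exists_orthonormalBasis_extension_of_card_eq (by simp)
  refine ⟨b, hb 1 (by simp), ‖x - ⟪x, v⟫ • v‖, norm_nonneg _, ?_⟩
  rw [hb 0 (by simp)]
  exact eq_add_of_sub_eq (congrArg Subtype.val hux).symm

lemma lintegral_polar_half_cone {r ω : ℝ} (hr : 0 ≤ r) (hω : ω ∈ Icc (-(π / 2)) (π / 2)) :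
    ∫⁻ φ in Ioo 0 π, ENNReal.ofReal
        (sightDensity ((r * cos (φ - ω)) ^ 2) * (r * cos (φ - ω)) / 2) =
      ENNReal.ofReal ((∫ τ in -(r * sin ω)..r, sightDensity (r ^ 2 - τ ^ 2)) / 2) := by
  have hle : 0 ≤ ω + π / 2 := by linarith [hω.1]
  have cont : Continuous fun φ => sightDensity ((r * cos (φ - ω)) ^ 2) * (r * cos (φ - ω)) :=
    (continuous_sightDensity.comp (by fun_prop)).mul (by fun_prop)
  have subst : ∫ φ in 0..ω + π / 2, sightDensity ((r * cos (φ - ω)) ^ 2) * (r * cos (φ - ω)) =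
      ∫ τ in -(r * sin ω)..r, sightDensity (r ^ 2 - τ ^ 2) := by
    have deriv_sin (φ : ℝ) (_ : φ ∈ uIcc 0 (ω + π / 2)) :
        HasDerivAt (fun φ => r * sin (φ - ω)) (r * cos (φ - ω)) φ := by
      simpa using (((hasDerivAt_id φ).sub_const ω).sin).const_mul r
    convert intervalIntegral.integral_comp_mul_deriv deriv_sin (by fun_prop)
      (continuous_sightDensity.comp (by fun_prop : Continuous fun τ : ℝ => r ^ 2 - τ ^ 2)) using 2
    · ext φ
      simp only [Function.comp_apply, mul_pow, cos_sq']
      ring_nf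
    · simp
    · simp
    · rw [add_sub_cancel_left, sin_pi_div_two, mul_one]
  have restrict : ∫⁻ φ in Ioo 0 π, ENNReal.ofReal
        (sightDensity ((r * cos (φ - ω)) ^ 2) * (r * cos (φ - ω)) / 2) =
      ∫⁻ φ in Ioo 0 (ω + π / 2), ENNReal.ofReal
        (sightDensity ((r * cos (φ - ω)) ^ 2) * (r * cos (φ - ω)) / 2) := by
    refine (setLIntegral_eq_of_subset_of_eq_zero measurableSet_Ioo measurableSet_Ioo
      (Ioo_subset_Ioo_right (by linarith [hω.2])) fun φ hφ => ENNReal.ofReal_of_nonpos ?_)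
    have hcos : cos (φ - ω) ≤ 0 := cos_nonpos_of_pi_div_two_le_of_le
      (by by_contra! h; exact hφ.2 ⟨hφ.1.1, by linarith⟩) (by linarith [hφ.1.2, hω.1])
    have := mul_nonpos_of_nonneg_of_nonpos (sightDensity_nonneg ((r * cos (φ - ω)) ^ 2))
      (mul_nonpos_of_nonneg_of_nonpos hr hcos)
    linarith
  rw [restrict, ← subst, ← intervalIntegral.integral_div, intervalIntegral.integral_of_le hle,
    ofReal_integral_eq_lintegral_ofReal, setLIntegral_congr Ioo_ae_eq_Ioc]
  · exact ((cont.div_const 2).integrableOn_Icc).mono_set Ioc_subset_Icc_self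
  · filter_upwards [ae_restrict_mem measurableSet_Ioc] with φ hφ
    have := cos_nonneg_of_mem_Icc (x := φ - ω) ⟨by linarith [hφ.1, hω.2], by linarith [hφ.2]⟩
    have := sightDensity_nonneg ((r * cos (φ - ω)) ^ 2)
    simp only [Pi.zero_apply]
    positivity

lemma volume_half_cone (r ω : ℝ) :
    volume {y : E3 | ‖y‖ < 1 ∧ ‖y‖ < r * cos ω * y 0 + r * sin ω * y 1 ∧ 0 < y 1} =
      ∫⁻ φ in Ioo 0 π, ENNReal.ofReal
        (sightDensity ((r * cos (φ - ω)) ^ 2) * (r * cos (φ - ω)) / 2) := by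
  set S : Set (ℝ × ℝ × ℝ) := {p | p.1 ^ 2 + p.2.1 ^ 2 + p.2.2 ^ 2 < 1} ∩
    ({p | √(p.1 ^ 2 + p.2.1 ^ 2 + p.2.2 ^ 2) < r * cos ω * p.1 + r * sin ω * p.2.1} ∩
      {p | 0 < p.2.1})
  have hS : MeasurableSet S := by
    refine .inter (measurableSet_lt ?_ ?_) (.inter (measurableSet_lt ?_ ?_)
      (measurableSet_lt ?_ ?_)) <;> fun_prop
  have coord : {y : E3 | ‖y‖ < 1 ∧ ‖y‖ < r * cos ω * y 0 + r * sin ω * y 1 ∧ 0 < y 1} =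
      {y : E3 | (y 0, y 1, y 2) ∈ S} := by
    ext y
    simp only [EuclideanSpace.norm_eq, Fin.sum_univ_three, Real.norm_eq_abs, sq_abs, mem_ofPred_eq,
      mem_inter_iff, S, Real.sqrt_lt' one_pos, one_pow]
  have fiber (φ ζ : ℝ) : {ρ | 0 < ρ ∧ (ρ * cos φ, ρ * sin φ, ζ) ∈ S} = {_ρ | 0 < sin φ} ∩
      {ρ | 0 < ρ ∧ ρ ^ 2 + ζ ^ 2 < 1 ∧ √(ρ ^ 2 + ζ ^ 2) < r * cos (φ - ω) * ρ} := by
    ext ρ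
    have radius : (ρ * cos φ) ^ 2 + (ρ * sin φ) ^ 2 = ρ ^ 2 := by
      linear_combination ρ ^ 2 * sin_sq_add_cos_sq φ
    have height : r * cos ω * (ρ * cos φ) + r * sin ω * (ρ * sin φ) = r * cos (φ - ω) * ρ := by
      rw [cos_sub]; ring
    simp only [mem_inter_iff, mem_ofPred_eq, S, radius, height]
    constructor
    · rintro ⟨hρ, h1, h2, h3⟩
      exact ⟨(mul_pos_iff_of_pos_left hρ).1 h3, hρ, h1, h2⟩
    · rintro ⟨h3, hρ, h1, h2⟩
      exact ⟨hρ, h1, h2, mul_pos hρ h3⟩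
  rw [coord, volume_eq_lintegral_cylindrical hS]
  refine (setLIntegral_eq_of_subset_of_eq_zero measurableSet_Ioo measurableSet_Ioo
    (Ioo_subset_Ioo_left (by linarith [pi_pos])) fun φ hφ => ?_).trans
    (setLIntegral_congr_fun measurableSet_Ioo fun φ hφ => ?_)
  · have : ¬ 0 < sin φ := (sin_nonpos_of_nonpos_of_neg_pi_le
      (not_lt.1 fun h => hφ.2 ⟨h, hφ.1.2⟩) hφ.1.1.le).not_gt
    simp [fiber, this]
  · simp [fiber, sin_pos_of_mem_Ioo hφ, ← lintegral_meridian_section]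

lemma volume_viewCone_inter_halfSpace (x : E3) {v : E3} (hv : ‖v‖ = 1) :
    volume (viewCone x ∩ {z | 0 < ⟪v, z⟫}) =
      ENNReal.ofReal ((∫ τ in -⟪x, v⟫..‖x‖, sightDensity (‖x‖ ^ 2 - τ ^ 2)) / 2) := by
  obtain ⟨b, hb, h, hh, hx⟩ := exists_orthonormalBasis_span_pair x v hv
  obtain ⟨ω, hω, hcos, hsin⟩ := exists_sqrt_mul_cos_sin hh ⟪x, v⟫
  have inner_eq (z : E3) : ⟪x, z⟫ = h * ⟪b 0, z⟫ + ⟪x, v⟫ * ⟪v, z⟫ := by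
    conv_lhs => rw [hx, inner_add_left, real_inner_smul_left, real_inner_smul_left]
  have hbv : ⟪v, b 0⟫ = 0 := hb ▸ b.inner_eq_zero (by decide)
  have hnorm : ‖x‖ = √(h ^ 2 + ⟪x, v⟫ ^ 2) := by
    rw [norm_eq_sqrt_real_inner, inner_eq, real_inner_comm, inner_eq, real_inner_comm x v]
    simp [hbv]
    ring_nf
  rw [← hnorm] at hcos hsin
  have image : viewCone x ∩ {z | 0 < ⟪v, z⟫} = b.repr ⁻¹' {y : E3 | ‖y‖ < 1 ∧
      ‖y‖ < ‖x‖ * cos ω * y 0 + ‖x‖ * sin ω * y 1 ∧ 0 < y 1} := by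
    ext z
    simp [viewCone, b.repr_apply_apply, hb, hcos, hsin, inner_eq z, and_assoc]
  rw [image, b.measurePreserving_repr.measure_preimage_emb
    b.repr.toHomeomorph.measurableEmbedding, volume_half_cone,
    lintegral_polar_half_cone (norm_nonneg x) hω, hsin]

lemma measurableSet_viewCone (x : E3) : MeasurableSet (viewCone x) :=
  (Metric.isOpen_ball.inter (isOpen_lt (by fun_prop) (by fun_prop))).measurableSet

lemma viewCone_zero : viewCone 0 = ∅ :=
  eq_empty_of_forall_notMem fun z hz => (norm_nonneg z).not_gt (by simpa using hz.2)

lemma volume_viewCone_inter_ne_top (x : E3) (s : Set E3) : volume (viewCone x ∩ s) ≠ ⊤ :=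
  measure_ne_top_of_subset (inter_subset_left.trans inter_subset_left) measure_ball_lt_top.ne

/-- For a point at distance `r` from the origin and a unit vector making the inner product `T` with
it, the volume of the part of its view cone in front of the plane normal to the vector minus the
volume of the part behind. -/
def viewImbalance (r T : ℝ) : ℝ := ∫ τ in 0..T, sightDensity (r ^ 2 - τ ^ 2)

lemma intervalIntegrable_sightDensity (r a b : ℝ) :
    IntervalIntegrable (fun τ => sightDensity (r ^ 2 - τ ^ 2)) volume a b :=
  (continuous_sightDensity.comp (by fun_prop)).intervalIntegrable a b

lemma viewImbalance_sub (r T T' : ℝ) :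
    viewImbalance r T' - viewImbalance r T = ∫ τ in T..T', sightDensity (r ^ 2 - τ ^ 2) :=
  intervalIntegral.integral_interval_sub_left (intervalIntegrable_sightDensity r 0 T')
    (intervalIntegrable_sightDensity r 0 T)

lemma volume_front_sub_volume_back (x : E3) {v : E3} (hv : ‖v‖ = 1) :
    volume.real (viewCone x ∩ {z | 0 < ⟪v, z⟫}) - volume.real (viewCone x ∩ {z | ⟪v, z⟫ < 0}) =
      viewImbalance ‖x‖ ⟪x, v⟫ := by
  have hT := abs_le.1 (abs_real_inner_le_norm x v)
  rw [hv, mul_one] at hT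
  have nonneg {T : ℝ} (hT : T ≤ ‖x‖) : 0 ≤ (∫ τ in T..‖x‖, sightDensity (‖x‖ ^ 2 - τ ^ 2)) / 2 :=
    div_nonneg (intervalIntegral.integral_nonneg hT fun _ _ => sightDensity_nonneg _) two_pos.le
  have front := volume_viewCone_inter_halfSpace x hv
  have back := volume_viewCone_inter_halfSpace x (v := -v) (by rwa [norm_neg])
  simp only [inner_neg_left, inner_neg_right, neg_neg, neg_pos] at back
  have even : ∫ τ in -⟪x, v⟫..0, sightDensity (‖x‖ ^ 2 - τ ^ 2) = viewImbalance ‖x‖ ⟪x, v⟫ := by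
    have := intervalIntegral.integral_comp_neg (a := 0) (b := ⟪x, v⟫)
      fun τ => sightDensity (‖x‖ ^ 2 - τ ^ 2)
    simpa only [even_two.neg_pow, neg_zero, viewImbalance] using this.symm
  have split := intervalIntegral.integral_add_adjacent_intervals
    (intervalIntegrable_sightDensity ‖x‖ (-⟪x, v⟫) 0) (intervalIntegrable_sightDensity ‖x‖ 0 ‖x‖)
  rw [measureReal_def, measureReal_def, front, back, ENNReal.toReal_ofReal (nonneg (by linarith)),
    ENNReal.toReal_ofReal (nonneg hT.2), ← split, even, ← viewImbalance_sub ‖x‖ ⟪x, v⟫ ‖x‖,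
    viewImbalance, viewImbalance]
  ring

lemma volume_viewCone_symmDiff {x y v : E3} {d : ℝ} (hd : 0 ≤ d) (hv : ‖v‖ = 1)
    (hy : y = x + d • v) : volume.real (viewCone x \ viewCone y) +
      volume.real (viewCone y \ viewCone x) =
        viewImbalance ‖y‖ ⟪y, v⟫ - viewImbalance ‖x‖ ⟪x, v⟫ := by
  have inner_eq (z : E3) : ⟪y, z⟫ = ⟪x, z⟫ + d * ⟪v, z⟫ := by
    rw [hy, inner_add_left, real_inner_smul_left]
  have front_mono : viewCone x ∩ {z | 0 < ⟪v, z⟫} ⊆ viewCone y ∩ {z | 0 < ⟪v, z⟫} := by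
    rintro z ⟨⟨hz, hxz⟩, hvz⟩
    exact ⟨⟨hz, hxz.trans_le (inner_eq z ▸ le_add_of_nonneg_right
      (mul_nonneg hd (le_of_lt hvz)))⟩, hvz⟩
  have back_anti : viewCone y ∩ {z | ⟪v, z⟫ < 0} ⊆ viewCone x ∩ {z | ⟪v, z⟫ < 0} := by
    rintro z ⟨⟨hz, hyz⟩, hvz⟩
    exact ⟨⟨hz, hyz.trans_le (inner_eq z ▸ add_le_of_nonpos_right
      (mul_nonpos_of_nonneg_of_nonpos hd hvz.le))⟩, hvz⟩
  have gained : viewCone y \ viewCone x =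
      (viewCone y ∩ {z | 0 < ⟪v, z⟫}) \ (viewCone x ∩ {z | 0 < ⟪v, z⟫}) := by
    ext z
    refine ⟨fun ⟨hy, hx⟩ => ⟨⟨hy, ?_⟩, fun h => hx h.1⟩,
      fun ⟨hy, hx⟩ => ⟨hy.1, fun h => hx ⟨h, hy.2⟩⟩⟩
    by_contra h
    refine hx ⟨hy.1, hy.2.trans_le (inner_eq z ▸ add_le_of_nonpos_right ?_)⟩
    exact mul_nonpos_of_nonneg_of_nonpos hd (not_lt.1 h)
  have lost : viewCone x \ viewCone y =
      (viewCone x ∩ {z | ⟪v, z⟫ < 0}) \ (viewCone y ∩ {z | ⟪v, z⟫ < 0}) := by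
    ext z
    refine ⟨fun ⟨hx, hy⟩ => ⟨⟨hx, ?_⟩, fun h => hy h.1⟩,
      fun ⟨hx, hy⟩ => ⟨hx.1, fun h => hy ⟨h, hx.2⟩⟩⟩
    by_contra h
    refine hy ⟨hx.1, hx.2.trans_le (inner_eq z ▸ le_add_of_nonneg_right ?_)⟩
    exact mul_nonneg hd (not_lt.1 h)
  have hpos : MeasurableSet {z : E3 | 0 < ⟪v, z⟫} := measurableSet_lt (by fun_prop) (by fun_prop)
  have hneg : MeasurableSet {z : E3 | ⟪v, z⟫ < 0} := measurableSet_lt (by fun_prop) (by fun_prop)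
  rw [gained, lost,
    measureReal_sdiff back_anti ((measurableSet_viewCone y).inter hneg)
      (volume_viewCone_inter_ne_top x _),
    measureReal_sdiff front_mono ((measurableSet_viewCone x).inter hpos)
      (volume_viewCone_inter_ne_top y _),
    ← volume_front_sub_volume_back x hv, ← volume_front_sub_volume_back y hv]
  ring

/-- For an edge of length `d` from a point at distance `r` to one at distance `r'` from the origin,
the inner product of the starting point with the unit direction of the edge. -/
def edgeSlope (d r r' : ℝ) : ℝ := (r' ^ 2 - r ^ 2 - d ^ 2) / (2 * d)

lemma sq_sub_edgeSlope_sq {d : ℝ} (hd : d ≠ 0) (r r' : ℝ) :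
    r' ^ 2 - (edgeSlope d r r' + d) ^ 2 = r ^ 2 - edgeSlope d r r' ^ 2 := by
  unfold edgeSlope
  field_simp
  ring

lemma hasDerivAt_viewImbalance (r T : ℝ) :
    HasDerivAt (viewImbalance r) (sightDensity (r ^ 2 - T ^ 2)) T :=
  ((continuous_sightDensity.comp (by fun_prop : Continuous fun τ : ℝ => r ^ 2 - τ ^ 2)
    ).integral_hasStrictDerivAt 0 T).hasDerivAt

lemma monotoneOn_viewImbalance_edge (r r' : ℝ) :
    MonotoneOn (fun d => viewImbalance r' (edgeSlope d r r' + d) -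
      viewImbalance r (edgeSlope d r r')) (Ioi 0) := by
  have deriv_eq (d : ℝ) (hd : d ∈ Ioi (0 : ℝ)) : HasDerivAt
      (fun d => viewImbalance r' (edgeSlope d r r' + d) - viewImbalance r (edgeSlope d r r'))
      (sightDensity (r ^ 2 - edgeSlope d r r' ^ 2)) d := by
    have hd' : d ≠ 0 := ne_of_gt hd
    have slope : ∃ s, HasDerivAt (fun d => edgeSlope d r r') s d := by
      refine ⟨_, HasDerivAt.div ((hasDerivAt_pow 2 d).const_sub _)
        ((hasDerivAt_id d).const_mul 2) ?_⟩
      simpa using hd'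
    obtain ⟨s, hs⟩ := slope
    have end_deriv := (hasDerivAt_viewImbalance r' _).comp d (hs.add (hasDerivAt_id d))
    have start_deriv := (hasDerivAt_viewImbalance r _).comp d hs
    refine (end_deriv.sub start_deriv).congr_deriv ?_
    simp only [Pi.add_apply, id, sq_sub_edgeSlope_sq hd']
    ring
  refine monotoneOn_of_deriv_nonneg (convex_Ioi 0)
    (fun d hd => (deriv_eq d hd).continuousAt.continuousWithinAt) ?_ ?_
  · exact fun d hd => (deriv_eq d (interior_subset hd)).differentiableAt.differentiableWithinAt
  · exact fun d hd => (deriv_eq d (interior_subset hd)).deriv ▸ sightDensity_nonneg _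

lemma volume_viewCone_symmDiff_le {x y : E3} {ε : ℝ} (hε : 0 < ε) (hxy : dist x y ≤ ε) :
    volume.real (viewCone x \ viewCone y) + volume.real (viewCone y \ viewCone x) ≤
      viewImbalance ‖y‖ (edgeSlope ε ‖x‖ ‖y‖ + ε) - viewImbalance ‖x‖ (edgeSlope ε ‖x‖ ‖y‖) := by
  rcases eq_or_ne x y with rfl | hne
  · rw [viewImbalance_sub, sdiff_self, measureReal_empty, add_zero]
    exact intervalIntegral.integral_nonneg (by linarith) fun _ _ => sightDensity_nonneg _
  set d := dist x y
  have hd : 0 < d := dist_pos.2 hne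
  have hnorm : ‖y - x‖ = d := (dist_eq_norm' x y).symm
  set v := d⁻¹ • (y - x)
  have hv : ‖v‖ = 1 := by
    rw [norm_smul, hnorm, norm_inv, norm_of_nonneg hd.le, inv_mul_cancel₀ hd.ne']
  have hy : y = x + d • v := by rw [smul_inv_smul₀ hd.ne']; abel
  have slope : edgeSlope d ‖x‖ ‖y‖ = ⟪x, v⟫ := by
    rw [edgeSlope, real_inner_smul_right, inner_sub_right, real_inner_self_eq_norm_sq,
      ← hnorm, norm_sub_sq_real, hnorm, real_inner_comm]
    field_simp
    ring
  have slope' : edgeSlope d ‖x‖ ‖y‖ + d = ⟪y, v⟫ := by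
    have : ⟪y - x, v⟫ = d := by
      rw [real_inner_smul_right, real_inner_self_eq_norm_sq, hnorm]
      field_simp
    rw [slope, ← this, ← inner_add_left, add_sub_cancel]
  calc _ = viewImbalance ‖y‖ (edgeSlope d ‖x‖ ‖y‖ + d) -
        viewImbalance ‖x‖ (edgeSlope d ‖x‖ ‖y‖) := by
        rw [slope', slope, volume_viewCone_symmDiff hd.le hv hy]
    _ ≤ _ := monotoneOn_viewImbalance_edge _ _ hd hε hxy

lemma viewImbalance_sub_le_mul (r : ℝ) {T T' : ℝ} (hT : T ≤ T') :
    viewImbalance r T' - viewImbalance r T ≤ 2 / 3 * (T' - T) := by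
  rw [viewImbalance_sub]
  refine (intervalIntegral.integral_mono_on hT (intervalIntegrable_sightDensity r T T')
    intervalIntegrable_const fun τ _ => sightDensity_le _).trans_eq ?_
  rw [intervalIntegral.integral_const, smul_eq_mul, mul_comm]

lemma viewImbalance_zero_left (T : ℝ) : viewImbalance 0 T = 0 := by
  have zero (τ : ℝ) : sightDensity (0 ^ 2 - τ ^ 2) = 0 :=
    sightDensity_of_le_one (by nlinarith [sq_nonneg τ])
  simp only [viewImbalance, zero, intervalIntegral.integral_zero]

-- Where `r ^ 2 - τ ^ 2 ≤ 1` the density vanishes, so the bound `2 / 3` wastes the whole interval.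
lemma viewImbalance_sub_le_sub_gain {r T T' M : ℝ} (hM : 0 < M) (hT : T ≤ T') (hT' : T' ≤ M) :
    viewImbalance r T' - viewImbalance r T ≤
      2 / 3 * (T' - T) - (min (r ^ 2 - T ^ 2) 1 - min (r ^ 2 - T' ^ 2) 1) / (3 * M) := by
  rcases le_or_gt (min (r ^ 2 - T ^ 2) 1) (min (r ^ 2 - T' ^ 2) 1) with hle | hlt
  · have := div_nonpos_of_nonpos_of_nonneg (sub_nonpos.2 hle) (by positivity : 0 ≤ 3 * M)
    linarith [viewImbalance_sub_le_mul r hT]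
  have hT'1 : r ^ 2 - T' ^ 2 ≤ 1 := by
    by_contra! h
    exact hlt.not_ge ((min_le_right _ _).trans_eq (min_eq_right h.le).symm)
  have hsq : T ^ 2 < T' ^ 2 := by
    by_contra! h
    exact hlt.not_ge (min_le_min_right 1 (by linarith))
  have hT'0 : 0 ≤ T' := by nlinarith
  set S := √(max (T ^ 2) (r ^ 2 - 1))
  have hS : S ^ 2 = max (T ^ 2) (r ^ 2 - 1) := Real.sq_sqrt (le_max_of_le_left (sq_nonneg T))
  have hTS : T ≤ S := Real.le_sqrt_of_sq_le (le_max_left _ _)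
  have hST' : S ≤ T' := (Real.sqrt_le_left hT'0).2 (max_le hsq.le (by linarith))
  have wasted : viewImbalance r T' - viewImbalance r S = 0 := by
    rw [viewImbalance_sub]
    refine intervalIntegral.integral_zero_ae (ae_of_all _ fun τ hτ => sightDensity_of_le_one ?_)
    rw [uIoc_of_le hST'] at hτ
    have : S ^ 2 ≤ τ ^ 2 := by gcongr; exact hτ.1.le
    linarith [le_max_right (T ^ 2) (r ^ 2 - 1)]
  have gain : (min (r ^ 2 - T ^ 2) 1 - min (r ^ 2 - T' ^ 2) 1) / (3 * M) ≤ 2 / 3 * (T' - S) := by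
    have hmin : min (r ^ 2 - T ^ 2) 1 = r ^ 2 - S ^ 2 := by
      rw [hS, ← min_sub_sub_left, sub_sub_cancel]
    rw [hmin, min_eq_left hT'1, div_le_iff₀ (by positivity)]
    nlinarith [mul_nonneg (sub_nonneg.2 hST') (by linarith : 0 ≤ 2 * M - T' - S)]
  linarith [viewImbalance_sub_le_mul r hTS]

lemma viewImbalance_sub_le_sub_apex_gain {r T T' M : ℝ} (hr : 1 ≤ r) (hM : 0 < M) (hT : T ≤ 0)
    (hT' : 0 ≤ T') (hT'M : T' ≤ M) :
    viewImbalance r T' - viewImbalance r T ≤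
      2 / 3 * (T' - T) - (1 - min (r ^ 2 - T' ^ 2) 1) / (3 * M) := by
  have rise := viewImbalance_sub_le_sub_gain (r := r) hM hT' hT'M
  rw [min_eq_right (by nlinarith : 1 ≤ r ^ 2 - 0 ^ 2)] at rise
  linarith [viewImbalance_sub_le_mul r hT]

lemma two_mul_measureReal_le_sum_sdiff {α : Type*} [MeasurableSpace α] {μ : Measure α} {n : ℕ}
    {A : Set α} {C : ℕ → Set α} (hC : ∀ i, μ (C i) ≠ ⊤) (h0 : C 0 = ∅) (hn : C n = ∅)
    (hA : ∀ z ∈ A, ∃ i ≤ n, z ∈ C i) :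
    2 * μ.real A ≤
      ∑ i ∈ Finset.range n, (μ.real (C i \ C (i + 1)) + μ.real (C (i + 1) \ C i)) := by
  have entered : A ⊆ ⋃ i ∈ Finset.range n, C (i + 1) \ C i := by
    intro z hz
    by_contra h
    simp only [Finset.mem_range, mem_iUnion, not_exists, mem_sdiff, not_and_not_right] at h
    obtain ⟨i, hi, hzi⟩ := hA z hz
    have never : ∀ j ≤ n, z ∉ C j := by
      intro j
      induction j with
      | zero => simp [h0]
      | succ j ih => exact fun hj hz => ih (by omega) (h j hj hz)
    exact never i hi hzi
  have left : A ⊆ ⋃ i ∈ Finset.range n, C i \ C (i + 1) := by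
    intro z hz
    by_contra h
    simp only [Finset.mem_range, mem_iUnion, not_exists, mem_sdiff, not_and_not_right] at h
    obtain ⟨i, hi, hzi⟩ := hA z hz
    have always : ∀ j, i ≤ j → j ≤ n → z ∈ C j := fun j hij =>
      Nat.le_induction (fun _ => hzi) (fun j _ ih hj => h j hj (ih (by omega))) j hij
    simpa [hn] using always n hi le_rfl
  have bound {D : ℕ → Set α} (hD : ∀ i, μ (D i) ≠ ⊤) (hAD : A ⊆ ⋃ i ∈ Finset.range n, D i) :
      μ.real A ≤ ∑ i ∈ Finset.range n, μ.real (D i) :=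
    (measureReal_mono hAD (measure_biUnion_lt_top (Finset.finite_toSet _)
      fun i _ => (hD i).lt_top).ne).trans (measureReal_biUnion_finset_le _ _)
  rw [Finset.sum_add_distrib, two_mul]
  exact add_le_add (bound (fun i => measure_ne_top_of_subset sdiff_subset (hC i)) left)
    (bound (fun i => measure_ne_top_of_subset sdiff_subset (hC (i + 1))) entered)

lemma edgeSlope_le_edgeSlope_add {ε r₀ r₁ r₂ : ℝ} (hε : 0 < ε)
    (h : r₂ ^ 2 - 2 * r₁ ^ 2 + r₀ ^ 2 ≤ 2 * ε ^ 2) : edgeSlope ε r₁ r₂ ≤ edgeSlope ε r₀ r₁ + ε := by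
  unfold edgeSlope
  rw [div_add' _ _ _ (by positivity)]
  gcongr
  linarith

lemma edgeSlope_add_le {ε r r' : ℝ} (hε : 0 < ε) (hr' : 0 ≤ r') (h : r' ≤ r + ε) :
    edgeSlope ε r r' + ε ≤ r + ε := by
  rw [edgeSlope, add_le_add_iff_right, div_le_iff₀ (by positivity)]
  nlinarith

lemma edgeSlope_nonpos {ε r r' : ℝ} (hε : 0 < ε) (hr' : 0 ≤ r') (h : r' ≤ r) :
    edgeSlope ε r r' ≤ 0 :=
  div_nonpos_of_nonpos_of_nonneg (by nlinarith) (by positivity)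

lemma edgeSlope_add_nonneg {ε r r' : ℝ} (hε : 0 < ε) (hr : 0 ≤ r) (h : r ≤ r') :
    0 ≤ edgeSlope ε r r' + ε := by
  rw [edgeSlope, div_add' _ _ _ (by positivity)]
  exact div_nonneg (by nlinarith) (by positivity)

lemma neg_le_edgeSlope_zero {ε r : ℝ} (hε : 0 < ε) (hr : 0 ≤ r) (h : r ≤ ε) :
    -ε ≤ edgeSlope ε r 0 := by
  rw [edgeSlope, le_div_iff₀ (by positivity)]
  nlinarith

section Polygon

variable {n : ℕ} {ε : ℝ} {r : ℕ → ℝ}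

lemma sum_viewImbalance_by_parts (T : ℕ → ℝ) (h0 : r 0 = 0) (hn : r (n + 1) = 0) :
    ∑ i ∈ Finset.range (n + 1), (viewImbalance (r (i + 1)) (T i + ε) - viewImbalance (r i) (T i)) =
      ∑ i ∈ Finset.range n,
        (viewImbalance (r (i + 1)) (T i + ε) - viewImbalance (r (i + 1)) (T (i + 1))) := by
  rw [Finset.sum_sub_distrib, Finset.sum_range_succ, Finset.sum_range_succ', h0, hn,
    viewImbalance_zero_left, viewImbalance_zero_left, Finset.sum_sub_distrib, add_zero, add_zero]

lemma le_add_of_step_le (hstep : ∀ i, |r (i + 1) - r i| ≤ ε) (i : ℕ) : r (i + 1) ≤ r i + ε := by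
  linarith [(abs_le.1 (hstep i)).2]

lemma le_mul_of_step_le (h0 : r 0 = 0) (hstep : ∀ i, |r (i + 1) - r i| ≤ ε) (i : ℕ) :
    r i ≤ i * ε := by
  induction i with
  | zero => simp [h0]
  | succ i ih => push_cast; linarith [le_add_of_step_le hstep i]

lemma exists_apex (hn : r (n + 1) = 0) (h0 : r 0 = 0) (htop : ∃ i ≤ n + 1, 1 ≤ r i) :
    ∃ k < n, 1 ≤ r (k + 1) ∧ r k ≤ r (k + 1) ∧ r (k + 2) ≤ r (k + 1) := by
  obtain ⟨i, hi, hri⟩ := htop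
  obtain ⟨m, hm, hmax⟩ := (Finset.range (n + 2)).exists_max_image r ⟨0, by simp⟩
  have h1 : 1 ≤ r m := hri.trans (hmax i (Finset.mem_range.2 (by omega)))
  rw [Finset.mem_range] at hm
  obtain ⟨k, rfl⟩ := Nat.exists_eq_succ_of_ne_zero (fun h => by linarith [h ▸ h0] : m ≠ 0)
  have hkn : k ≠ n := by rintro rfl; linarith
  exact ⟨k, by omega, h1, hmax k (Finset.mem_range.2 (by omega)),
    hmax (k + 2) (Finset.mem_range.2 (by omega))⟩

/-- The squared distance from the origin to the line through the `i`-th edge of a polygon with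
vertex heights `r` and edges of length `ε`, capped at `1`, and taken to be `1` once the vertex
`k + 1` is passed. -/
def edgeLinePotential (ε : ℝ) (r : ℕ → ℝ) (k i : ℕ) : ℝ :=
  if i ≤ k then min (r i ^ 2 - edgeSlope ε (r i) (r (i + 1)) ^ 2) 1 else 1

lemma viewImbalance_vertex_le {M : ℝ} {k : ℕ} (hε : 0 < ε) (hM : 0 < M) (hr : ∀ i, 0 ≤ r i)
    (hdiff : ∀ i, r (i + 2) ^ 2 - 2 * r (i + 1) ^ 2 + r i ^ 2 ≤ 2 * ε ^ 2)
    (hle : ∀ i < n, edgeSlope ε (r i) (r (i + 1)) + ε ≤ M)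
    (hk1 : 1 ≤ r (k + 1)) (hk : r k ≤ r (k + 1)) (hk' : r (k + 2) ≤ r (k + 1)) {i : ℕ}
    (hi : i < n) :
    viewImbalance (r (i + 1)) (edgeSlope ε (r i) (r (i + 1)) + ε) -
        viewImbalance (r (i + 1)) (edgeSlope ε (r (i + 1)) (r (i + 2))) ≤
      2 / 3 * (edgeSlope ε (r i) (r (i + 1)) + ε - edgeSlope ε (r (i + 1)) (r (i + 2))) -
        (edgeLinePotential ε r k (i + 1) - edgeLinePotential ε r k i) / (3 * M) := by
  have turn := edgeSlope_le_edgeSlope_add hε (hdiff i)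
  have same_line := sq_sub_edgeSlope_sq hε.ne' (r i) (r (i + 1))
  unfold edgeLinePotential
  rcases lt_trichotomy i k with hik | rfl | hik
  · rw [if_pos hik.le, if_pos (Nat.succ_le_of_lt hik), ← same_line]
    exact viewImbalance_sub_le_sub_gain hM turn (hle i hi)
  · rw [if_pos le_rfl, if_neg (Nat.not_succ_le_self i), ← same_line]
    exact viewImbalance_sub_le_sub_apex_gain hk1 hM (edgeSlope_nonpos hε (hr _) hk')
      (edgeSlope_add_nonneg hε (hr _) hk) (hle i hi)
  · rw [if_neg hik.not_ge, if_neg (by omega), sub_self, zero_div, sub_zero]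
    exact viewImbalance_sub_le_mul _ turn

-- The lines through the edges start at distance `0` from the origin and are at distance at least
-- `1` when the farthest vertex is passed, so the gains add up to at least `1 / (3 * M)`.
lemma sum_viewImbalance_le (hε : 0 < ε) (hr : ∀ i, 0 ≤ r i) (h0 : r 0 = 0) (hn : r (n + 1) = 0)
    (hstep : ∀ i, |r (i + 1) - r i| ≤ ε)
    (hdiff : ∀ i, r (i + 2) ^ 2 - 2 * r (i + 1) ^ 2 + r i ^ 2 ≤ 2 * ε ^ 2)
    (htop : ∃ i ≤ n + 1, 1 ≤ r i) :
    ∑ i ∈ Finset.range (n + 1), (viewImbalance (r (i + 1)) (edgeSlope ε (r i) (r (i + 1)) + ε) -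
        viewImbalance (r i) (edgeSlope ε (r i) (r (i + 1)))) ≤
      2 / 3 * ((n + 1) * ε) - 1 / (3 * ((n + 1) * ε)) := by
  set M : ℝ := (n + 1) * ε
  have hM : 0 < M := by positivity
  set T : ℕ → ℝ := fun i => edgeSlope ε (r i) (r (i + 1))
  obtain ⟨k, hkn, hk1, hk, hk'⟩ := exists_apex hn h0 htop
  set g := edgeLinePotential ε r k
  have slope_le (i : ℕ) (hi : i < n) : T i + ε ≤ M := by
    have := edgeSlope_add_le hε (hr (i + 1)) (le_add_of_step_le hstep i)
    have : (i : ℝ) * ε ≤ n * ε := by gcongr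
    linarith [le_mul_of_step_le h0 hstep i]
  have first_slope : T 0 ≤ 0 := by
    linarith [edgeSlope_add_le hε (hr 1) (le_add_of_step_le hstep 0)]
  have last_slope : -ε ≤ T n := by
    have := (abs_le.1 (hstep n)).1
    rw [hn, zero_sub, neg_le_neg_iff] at this
    simpa only [T, hn] using neg_le_edgeSlope_zero hε (hr n) this
  have g_start : g 0 ≤ 0 := by
    simp only [g, edgeLinePotential, zero_le, if_true, h0]
    exact (min_le_left _ _).trans (by nlinarith [sq_nonneg (T 0)])
  have g_end : g n = 1 := if_neg hkn.not_ge
  have turning : ∑ i ∈ Finset.range n, (T i + ε - T (i + 1)) = n * ε - (T n - T 0) := by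
    have := Finset.sum_range_sub T n
    simp only [Finset.sum_sub_distrib, Finset.sum_add_distrib, Finset.sum_const, Finset.card_range,
      nsmul_eq_mul] at this ⊢
    linarith
  calc _ = ∑ i ∈ Finset.range n, _ := sum_viewImbalance_by_parts T h0 hn
    _ ≤ ∑ i ∈ Finset.range n,
        (2 / 3 * (T i + ε - T (i + 1)) - (g (i + 1) - g i) / (3 * M)) :=
      Finset.sum_le_sum fun i hi => viewImbalance_vertex_le hε hM hr hdiff slope_le hk1 hk hk'
        (Finset.mem_range.1 hi)
    _ = 2 / 3 * (n * ε - (T n - T 0)) - (g n - g 0) / (3 * M) := by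
      rw [Finset.sum_sub_distrib, ← Finset.sum_div, ← Finset.mul_sum, Finset.sum_range_sub, turning]
    _ ≤ _ := by
      have : 1 / (3 * M) ≤ (g n - g 0) / (3 * M) := by gcongr; linarith
      linarith

lemma two_mul_volume_ball_le_sum_sdiff_viewCone {x : ℕ → E3} (h0 : x 0 = 0) (hn : x n = 0)
    (hsee : ∀ z : E3, ‖z‖ = 1 → ∃ i ≤ n, 1 < ⟪x i, z⟫) :
    8 * π / 3 ≤ ∑ i ∈ Finset.range n, (volume.real (viewCone (x i) \ viewCone (x (i + 1))) +
      volume.real (viewCone (x (i + 1)) \ viewCone (x i))) := by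
  have ball : volume.real (Metric.ball (0 : E3) 1 \ {0}) = 4 * π / 3 := by
    rw [measureReal_def, measure_sdiff_null (measure_singleton _),
      EuclideanSpace.volume_ball_fin_three, ENNReal.ofReal_one, one_pow, one_mul,
      ENNReal.toReal_ofReal (by positivity)]
    ring
  refine le_trans ?_ (two_mul_measureReal_le_sum_sdiff (μ := volume) (C := fun i => viewCone (x i))
    (A := Metric.ball 0 1 \ {0}) (fun i => ?_) (by simp [h0, viewCone_zero])
    (by simp [hn, viewCone_zero]) fun z hz => ?_)
  · rw [ball]; linarith
  · simpa using volume_viewCone_inter_ne_top (x i) univ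
  · have hz0 : 0 < ‖z‖ := norm_pos_iff.2 hz.2
    obtain ⟨i, hi, h⟩ := hsee (‖z‖⁻¹ • z) (by simp [norm_smul, hz0.ne'])
    refine ⟨i, hi, hz.1, ?_⟩
    rwa [real_inner_smul_right, ← div_eq_inv_mul, one_lt_div hz0] at h

lemma polygon_length_ge {x : ℕ → E3} (hε : 0 < ε) (h0 : x 0 = 0) (hn : x (n + 1) = 0)
    (hdist : ∀ i, dist (x i) (x (i + 1)) ≤ ε)
    (hdiff : ∀ i, ‖x (i + 2)‖ ^ 2 - 2 * ‖x (i + 1)‖ ^ 2 + ‖x i‖ ^ 2 ≤ 2 * ε ^ 2)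
    (hsee : ∀ z : E3, ‖z‖ = 1 → ∃ i ≤ n + 1, 1 < ⟪x i, z⟫) :
    4 * π + 1 / (2 * ((n + 1) * ε)) ≤ (n + 1) * ε := by
  have hstep (i : ℕ) : |‖x (i + 1)‖ - ‖x i‖| ≤ ε := by
    rw [abs_sub_comm]
    exact (abs_norm_sub_norm_le _ _).trans (dist_eq_norm (x i) _ ▸ hdist i)
  have htop : ∃ i ≤ n + 1, 1 ≤ ‖x i‖ := by
    obtain ⟨z, hz⟩ := exists_norm_eq E3 zero_le_one
    obtain ⟨i, hi, h⟩ := hsee z hz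
    exact ⟨i, hi, by simpa [hz] using h.le.trans (real_inner_le_norm _ _)⟩
  have := calc 8 * π / 3 ≤ _ := two_mul_volume_ball_le_sum_sdiff_viewCone h0 hn hsee
    _ ≤ _ := Finset.sum_le_sum fun i _ => volume_viewCone_symmDiff_le hε (hdist i)
    _ ≤ _ := sum_viewImbalance_le (r := fun i => ‖x i‖) hε (fun i => norm_nonneg _) (by simp [h0])
      (by simp [hn]) hstep hdiff htop
  have halve : 1 / (2 * ((n + 1) * ε)) = 3 / 2 * (1 / (3 * ((n + 1) * ε))) := by
    field_simp
  linarith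

end Polygon

namespace IsMinimalLoop

open Filter Topology

variable {Γ : ℝ → E3} {L : ℝ}

lemma exists_lt_inner_sample (h : IsMinimalLoop Γ L) {n : ℕ} (hn : 0 < n) {z : E3} (hz : ‖z‖ = 1) :
    ∃ i < n, 1 - L / n < ⟪Γ (i * (L / n)), z⟫ := by
  have hn' : (0 : ℝ) < n := Nat.cast_pos.2 hn
  have he : 0 < L / n := div_pos h.pos hn'
  obtain ⟨t₀, ht₀⟩ := h.support z hz
  obtain ⟨t, ⟨ht, htL⟩, hΓ⟩ := h.exists_mem_Ico_eq 0 t₀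
  rw [hΓ] at ht₀
  have hfloor := Nat.floor_le (div_nonneg ht he.le)
  have hfloor' := Nat.lt_floor_add_one (t / (L / n))
  rw [le_div_iff₀ he] at hfloor
  rw [div_lt_iff₀ he] at hfloor'
  refine ⟨⌊t / (L / n)⌋₊, (Nat.floor_lt (div_nonneg ht he.le)).2 ?_, ?_⟩
  · rw [div_lt_iff₀ he, mul_div_cancel₀ _ hn'.ne']
    simpa using htL
  · have hclose : ⟪Γ t, z⟫ - ⟪Γ (⌊t / (L / n)⌋₊ * (L / n)), z⟫ ≤
        t - ⌊t / (L / n)⌋₊ * (L / n) := by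
      rw [← inner_sub_left]
      refine (real_inner_le_norm _ _).trans ?_
      rw [hz, mul_one, ← dist_eq_norm, dist_comm]
      exact h.dist_le hfloor
    linarith

/-- The samples at `n + 1` equidistant times are enlarged by `(1 - L / (n + 1))⁻¹`, so that every
point of the sphere is strictly seen from one of them. -/
lemma polygon_length_ge_of_zero (h : IsMinimalLoop Γ L) (h0 : Γ 0 = 0) {n : ℕ} (hn : 1 ≤ n)
    (hL : L < n + 1) :
    4 * π + 1 / (2 * (L / (1 - L / (n + 1)))) ≤ L / (1 - L / (n + 1)) := by
  have hn' : (0 : ℝ) < n + 1 := n.cast_add_one_pos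
  set e := L / (n + 1) with he_def
  have he : 0 < e := div_pos h.pos hn'
  have he1 : 0 < 1 - e := sub_pos.2 ((div_lt_one hn').2 hL)
  have hne : (n + 1) * e = L := mul_div_cancel₀ _ hn'.ne'
  have hscale : L / (1 - e) = (n + 1) * (e / (1 - e)) := by rw [← hne, mul_div_assoc]
  rw [hscale]
  refine polygon_length_ge (x := fun i => (1 - e)⁻¹ • Γ (i * e)) (div_pos he he1) ?_ ?_ ?_ ?_ ?_
  · simp [h0]
  · have : Γ L = 0 := by rw [h.periodic.eq, h0]
    simp [hne, this]
  · intro i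
    rw [dist_smul₀, Real.norm_of_nonneg (inv_nonneg.2 he1.le), div_eq_inv_mul]
    refine mul_le_mul_of_nonneg_left ((h.dist_le (by push_cast; linarith)).trans_eq ?_)
      (inv_nonneg.2 he1.le)
    push_cast
    ring
  · intro i
    have hdiff := h.second_difference_norm_sq_le (i * e) he
      (by rw [← hne]; gcongr; exact_mod_cast Nat.succ_le_succ hn)
    simp only [norm_smul, mul_pow, Real.norm_eq_abs, sq_abs]
    push_cast
    rw [show ((i : ℝ) + 2) * e = i * e + 2 * e by ring, show ((i : ℝ) + 1) * e = i * e + e by ring]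
    calc _ = (1 - e)⁻¹ ^ 2 * (‖Γ (i * e + 2 * e)‖ ^ 2 - 2 * ‖Γ (i * e + e)‖ ^ 2
          + ‖Γ (i * e)‖ ^ 2) := by ring
      _ ≤ (1 - e)⁻¹ ^ 2 * (2 * e ^ 2) := mul_le_mul_of_nonneg_left hdiff (sq_nonneg _)
      _ = _ := by ring
  · intro z hz
    obtain ⟨i, hi, hlt⟩ := h.exists_lt_inner_sample n.succ_pos hz
    refine ⟨i, hi.le, ?_⟩
    rw [real_inner_smul_left, ← div_eq_inv_mul, one_lt_div he1]
    simpa [he_def] using hlt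

lemma ne_zero (h : IsMinimalLoop Γ L) (t : ℝ) : Γ t ≠ 0 := by
  intro ht
  have hmesh : Tendsto (fun n : ℕ => L / (1 - L / ((n : ℝ) + 1))) atTop (𝓝 L) := by
    have : Tendsto (fun n : ℕ => (n : ℝ) + 1) atTop atTop :=
      tendsto_atTop_add_const_right _ _ tendsto_natCast_atTop_atTop
    have : Tendsto (fun n : ℕ => 1 - L / ((n : ℝ) + 1)) atTop (𝓝 1) := by
      simpa using tendsto_const_nhds.sub (this.const_div_atTop L)
    simpa only [div_one, Pi.div_def] using tendsto_const_nhds.div this one_ne_zero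
  have hlong : 4 * π + 1 / (2 * L) ≤ L := by
    refine le_of_tendsto_of_tendsto (tendsto_const_nhds.add
      (tendsto_const_nhds.div (hmesh.const_mul 2) (mul_pos two_pos h.pos).ne')) hmesh ?_
    filter_upwards [eventually_ge_atTop 1, eventually_ge_atTop ⌈L⌉₊] with n hn hnL
    refine (h.shift t).polygon_length_ge_of_zero (by simpa using ht) hn ?_
    linarith [Nat.ceil_le.1 hnL]
  have : 0 < 1 / (2 * L) := one_div_pos.2 (mul_pos two_pos h.pos)
  linarith [h.length_le]

end IsMinimalLoop

namespace IncrementsLeOn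

variable {E : Type*} [PseudoMetricSpace E] {f : ℝ → E} {P : ℝ → ℝ} {S : Set ℝ}

lemma locallyBoundedVariationOn (h : IncrementsLeOn f P univ) :
    LocallyBoundedVariationOn f univ := by
  intro x y _ _
  rw [univ_inter]
  rcases le_or_gt x y with hxy | hxy
  · exact ne_top_of_le_ne_top ENNReal.ofReal_ne_top ((h.mono (subset_univ _)).eVariationOn_le hxy)
  · simp [BoundedVariationOn, Icc_eq_empty hxy.not_ge]

lemma of_forall_one_lt (h : ∀ k > 1, IncrementsLeOn f (fun t => k * P t) S) :
    IncrementsLeOn f P S := by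
  intro x hx y hy hxy
  have hdist (k : ℝ) (hk : 1 < k) : dist (f x) (f y) ≤ (P y - P x) * k := by
    simpa only [← mul_sub, mul_comm] using h k hk hx hy hxy
  exact (le_iff_forall_one_lt_le_mul₀
    (by nlinarith [hdist 2 one_lt_two, dist_nonneg (x := f x) (y := f y)])).2 hdist

end IncrementsLeOn

section RadialProjection

variable {E : Type*} [NormedAddCommGroup E] [InnerProductSpace ℝ E] {f : ℝ → E} {m x y : ℝ}

/-- The radial projection of a curve to the unit sphere; it is `0` where the curve vanishes. -/
def radialProj (f : ℝ → E) (t : ℝ) : E := ‖f t‖⁻¹ • f t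

lemma norm_radialProj (hx : f x ≠ 0) : ‖radialProj f x‖ = 1 := norm_smul_inv_norm hx

lemma norm_smul_radialProj (hx : f x ≠ 0) : ‖f x‖ • radialProj f x = f x :=
  smul_inv_smul₀ (norm_ne_zero_iff.2 hx) _

lemma continuous_radialProj (hf : Continuous f) (h0 : ∀ t, f t ≠ 0) : Continuous (radialProj f) :=
  (hf.norm.inv₀ fun t => norm_ne_zero_iff.2 (h0 t)).smul hf

lemma dist_smul_radialProj_sq (hx : f x ≠ 0) (hy : f y ≠ 0) (a b : ℝ) :
    dist (a • radialProj f x) (b • radialProj f y) ^ 2 =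
      (a - b) ^ 2 + a * b * dist (radialProj f x) (radialProj f y) ^ 2 := by
  rw [dist_eq_norm, norm_smul_sub_smul_sq, norm_radialProj hx, norm_radialProj hy, dist_eq_norm]
  ring

lemma sq_norm_sub_norm_add_sq_dist_radialProj_le (hm : 0 < m) (hx : m ≤ ‖f x‖) (hy : m ≤ ‖f y‖) :
    (‖f y‖ - ‖f x‖) ^ 2 + (m * dist (radialProj f x) (radialProj f y)) ^ 2 ≤
      dist (f x) (f y) ^ 2 := by
  have hx0 : f x ≠ 0 := norm_pos_iff.1 (hm.trans_le hx)
  have hy0 : f y ≠ 0 := norm_pos_iff.1 (hm.trans_le hy)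
  have hexact := dist_smul_radialProj_sq hx0 hy0 ‖f x‖ ‖f y‖
  rw [norm_smul_radialProj hx0, norm_smul_radialProj hy0] at hexact
  have : m ^ 2 * dist (radialProj f x) (radialProj f y) ^ 2 ≤
      ‖f x‖ * ‖f y‖ * dist (radialProj f x) (radialProj f y) ^ 2 := by
    rw [sq m]
    gcongr
  linarith [mul_pow m (dist (radialProj f x) (radialProj f y)) 2]

lemma incrementsLeOn_radialProj (hf : IncrementsLeOn f (fun t => t) univ) (hm : 0 < m)
    (hr : ∀ t, m ≤ ‖f t‖) : IncrementsLeOn (radialProj f) (fun t => t / m) univ := by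
  intro x hx y hy hxy
  rw [← sub_div, le_div_iff₀' hm]
  refine le_trans (abs_le_of_sq_le_sq' ?_ dist_nonneg).2 (hf hx hy hxy)
  linarith [sq_norm_sub_norm_add_sq_dist_radialProj_le hm (hr x) (hr y),
    sq_nonneg (‖f y‖ - ‖f x‖)]

/-- The spherical arclength of the radial projection, measured from time `0`; it is the polar angle
of the unfolding. -/
def polarAngle (f : ℝ → E) (t : ℝ) : ℝ := variationOnFromTo (radialProj f) univ 0 t

lemma polarAngle_comp_neg (f : ℝ → E) (t : ℝ) :
    polarAngle (fun s => f (-s)) t = -polarAngle f (-t) := by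
  have hvar (x y : ℝ) : eVariationOn (radialProj fun s => f (-s)) (Icc x y) =
      eVariationOn (radialProj f) (Icc (-y) (-x)) := by
    rw [← image_neg_Icc]
    exact eVariationOn.comp_eq_of_antitoneOn (radialProj f) _ fun _ _ _ _ => neg_le_neg
  rcases le_total 0 t with ht | ht
  · rw [polarAngle, polarAngle, variationOnFromTo.eq_of_le _ _ ht,
      variationOnFromTo.eq_of_ge _ _ (neg_nonpos.2 ht), univ_inter, univ_inter, hvar, neg_zero,
      neg_neg]
  · rw [polarAngle, polarAngle, variationOnFromTo.eq_of_ge _ _ ht,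
      variationOnFromTo.eq_of_le _ _ (neg_nonneg.2 ht), univ_inter, univ_inter, hvar, neg_zero]

lemma polarAngle_sub (hv : LocallyBoundedVariationOn (radialProj f) univ) (hxy : x ≤ y) :
    polarAngle f y - polarAngle f x = (eVariationOn (radialProj f) (Icc x y)).toReal := by
  rw [polarAngle, polarAngle, variationOnFromTo.sub_right hv (mem_univ _) (mem_univ _) (mem_univ _),
    variationOnFromTo.eq_of_le _ _ hxy, univ_inter]

lemma incrementsLeOn_polarAngle (hv : LocallyBoundedVariationOn (radialProj f) univ) :
    IncrementsLeOn (radialProj f) (polarAngle f) univ := by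
  intro x _ y _ hxy
  have hfin : BoundedVariationOn (radialProj f) (Icc x y) := by
    have := hv x y (mem_univ x) (mem_univ y)
    rwa [univ_inter] at this
  rw [polarAngle_sub hv hxy]
  exact hfin.dist_le (left_mem_Icc.2 hxy) (right_mem_Icc.2 hxy)

lemma monotone_polarAngle (hv : LocallyBoundedVariationOn (radialProj f) univ) :
    Monotone (polarAngle f) := monotoneOn_univ.1 (incrementsLeOn_polarAngle hv).monotoneOn

lemma polarAngle_sub_le (hv : LocallyBoundedVariationOn (radialProj f) univ) {P : ℝ → ℝ}
    (hP : IncrementsLeOn (radialProj f) P (Icc x y)) (hxy : x ≤ y) :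
    polarAngle f y - polarAngle f x ≤ P y - P x := by
  rw [polarAngle_sub hv hxy]
  exact ENNReal.toReal_le_of_le_ofReal
    (sub_nonneg.2 (hP.monotoneOn (left_mem_Icc.2 hxy) (right_mem_Icc.2 hxy) hxy))
    (hP.eVariationOn_le hxy)

/-- Integrated form of `r'² + m² θ'² ≤ 1`: the chord inequality is tested against the single
direction `(A, B)` in which the integrated inequality is wanted. -/
lemma sq_norm_sub_norm_add_sq_polarAngle_sub_le (hf : IncrementsLeOn f (fun t => t) univ)
    (hv : LocallyBoundedVariationOn (radialProj f) univ) (hm : 0 < m)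
    (hr : ∀ t ∈ Icc x y, m ≤ ‖f t‖) (hxy : x ≤ y) :
    (‖f y‖ - ‖f x‖) ^ 2 + (m * (polarAngle f y - polarAngle f x)) ^ 2 ≤ (y - x) ^ 2 := by
  set A := ‖f y‖ - ‖f x‖
  set B := m * (polarAngle f y - polarAngle f x)
  have chord {s t : ℝ} (hst : s ≤ t) : dist (f s) (f t) ^ 2 ≤ (t - s) ^ 2 :=
    pow_le_pow_left₀ dist_nonneg (hf (mem_univ s) (mem_univ t) hst) 2
  have hB0 : 0 ≤ B := mul_nonneg hm.le (sub_nonneg.2 (monotone_polarAngle hv hxy))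
  rcases hB0.eq_or_lt with h0 | hpos
  · rw [← h0, zero_pow two_ne_zero, add_zero]
    exact (sq_le_sq' (by linarith [(abs_le.1 (abs_norm_sub_norm_le (f y) (f x))).1])
      (norm_sub_norm_le _ _)).trans (by simpa only [← dist_eq_norm, dist_comm] using chord hxy)
  set N := √(A ^ 2 + B ^ 2)
  have hN2 : N ^ 2 = A ^ 2 + B ^ 2 := sq_sqrt (by positivity)
  have hNpos : 0 < N := sqrt_pos.2 (by positivity)
  have hP : IncrementsLeOn (radialProj f) (fun t => (N * t - A * ‖f t‖) / (B * m)) (Icc x y) := by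
    intro s hs t ht hst
    rw [← sub_div, le_div_iff₀' (mul_pos hpos hm)]
    have hpyth := (sq_norm_sub_norm_add_sq_dist_radialProj_le hm (hr s hs) (hr t ht)).trans
      (chord hst)
    have hcauchy : A * (‖f t‖ - ‖f s‖) + B * (m * dist (radialProj f s) (radialProj f t)) ≤
        N * (t - s) := by
      refine (abs_le_of_sq_le_sq' ?_ (mul_nonneg hNpos.le (sub_nonneg.2 hst))).2
      rw [mul_pow, hN2]
      have := mul_le_mul_of_nonneg_left hpyth (add_nonneg (sq_nonneg A) (sq_nonneg B))
      linarith [sq_nonneg (A * (m * dist (radialProj f s) (radialProj f t)) -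
        B * (‖f t‖ - ‖f s‖))]
    linarith
  have hθ := polarAngle_sub_le hv hP hxy
  rw [← sub_div, le_div_iff₀' (mul_pos hpos hm)] at hθ
  have hle : N * N ≤ N * (y - x) := by linear_combination hθ + hN2
  rw [← hN2]
  exact pow_le_pow_left₀ hNpos.le (le_of_mul_le_mul_left hle hNpos) 2

end RadialProjection

section PolarCoordinates

/-- The point of the plane with polar coordinates `(r, θ)`. -/
def polarPoint (r θ : ℝ) : E2 := r • !₂[cos θ, sin θ]

variable {r₁ r₂ θ₁ θ₂ : ℝ}

lemma inner_polarPoint (r₁ θ₁ r₂ θ₂ : ℝ) :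
    ⟪polarPoint r₁ θ₁, polarPoint r₂ θ₂⟫ = r₁ * r₂ * cos (θ₁ - θ₂) := by
  rw [cos_sub, polarPoint, polarPoint, real_inner_smul_left, real_inner_smul_right,
    PiLp.inner_apply, Fin.sum_univ_two]
  simp
  ring

lemma dist_polarPoint_sq (r₁ θ₁ r₂ θ₂ : ℝ) : dist (polarPoint r₁ θ₁) (polarPoint r₂ θ₂) ^ 2 =
    (r₁ - r₂) ^ 2 + r₁ * r₂ * (2 * (1 - cos (θ₁ - θ₂))) := by
  rw [dist_eq_norm, norm_sub_sq_real, ← real_inner_self_eq_norm_sq, ← real_inner_self_eq_norm_sq,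
    inner_polarPoint, inner_polarPoint, inner_polarPoint, sub_self, sub_self, cos_zero]
  ring

lemma dist_polarPoint_sq_le (hr : 0 ≤ r₁ * r₂) : dist (polarPoint r₁ θ₁) (polarPoint r₂ θ₂) ^ 2 ≤
    (r₁ - r₂) ^ 2 + r₁ * r₂ * (θ₁ - θ₂) ^ 2 := by
  rw [dist_polarPoint_sq]
  gcongr
  linarith [one_sub_sq_div_two_le_cos (x := θ₁ - θ₂)]

lemma continuous_polarPoint {X : Type*} [TopologicalSpace X] {r θ : X → ℝ} (hr : Continuous r)
    (hθ : Continuous θ) : Continuous fun x => polarPoint (r x) (θ x) := by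
  unfold polarPoint
  fun_prop

lemma angle_eq_of_polarPoint_eq (h₁ : 0 < r₁) (h₂ : 0 < r₂) (hθ : |θ₁ - θ₂| < 2 * π)
    (h : polarPoint r₁ θ₁ = polarPoint r₂ θ₂) : θ₁ = θ₂ := by
  have hdist := dist_polarPoint_sq r₁ θ₁ r₂ θ₂
  rw [h, dist_self, zero_pow two_ne_zero] at hdist
  have hcos : r₁ * r₂ * (2 * (1 - cos (θ₁ - θ₂))) = 0 :=
    le_antisymm (by linarith [sq_nonneg (r₁ - r₂)])
      (mul_nonneg (mul_pos h₁ h₂).le (by linarith [cos_le_one (θ₁ - θ₂)]))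
  rw [mul_eq_zero_iff_left (mul_pos h₁ h₂).ne'] at hcos
  exact sub_eq_zero.1
    ((cos_eq_one_iff_of_lt_of_lt (abs_lt.1 hθ).1 (abs_lt.1 hθ).2).1 (by linarith))

/-- Polar equation of a line: `h / cos (θ - α)` runs through the line at distance `h` from the
origin with normal direction `α`, at position `h * tan (θ - α)`. -/
lemma dist_polarPoint_div_cos {h α : ℝ} (hh : 0 ≤ h) (h₁ : 0 < cos (θ₁ - α))
    (h₂ : 0 < cos (θ₂ - α)) (hle : tan (θ₁ - α) ≤ tan (θ₂ - α)) :
    dist (polarPoint (h / cos (θ₁ - α)) θ₁) (polarPoint (h / cos (θ₂ - α)) θ₂) =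
      h * tan (θ₂ - α) - h * tan (θ₁ - α) := by
  rw [← mul_sub]
  refine (sq_eq_sq₀ dist_nonneg (mul_nonneg hh (sub_nonneg.2 hle))).1 ?_
  rw [dist_polarPoint_sq, show θ₁ - θ₂ = (θ₁ - α) - (θ₂ - α) by ring, cos_sub (θ₁ - α) (θ₂ - α),
    tan_eq_sin_div_cos, tan_eq_sin_div_cos, div_sub_div _ _ h₁.ne' h₂.ne',
    div_sub_div _ _ h₂.ne' h₁.ne']
  have sin_sq₁ := sin_sq (θ₁ - α)
  have sin_sq₂ := sin_sq (θ₂ - α)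
  generalize cos (θ₁ - α) = c₁ at *
  generalize cos (θ₂ - α) = c₂ at *
  field_simp
  linear_combination (-(h ^ 2 * c₁ ^ 2)) * sin_sq₂ - h ^ 2 * c₂ ^ 2 * sin_sq₁

lemma linearIndependent_polarPoint (h₁ : r₁ ≠ 0) (h₂ : r₂ ≠ 0) (hθ : sin (θ₂ - θ₁) ≠ 0) :
    LinearIndependent ℝ ![polarPoint r₁ θ₁, polarPoint r₂ θ₂] := by
  refine LinearIndependent.pair_iff.2 fun a b hab => ?_
  have test (φ : ℝ) : a * (r₁ * cos (θ₁ - φ)) + b * (r₂ * cos (θ₂ - φ)) = 0 := by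
    have := congrArg (inner ℝ · (polarPoint 1 φ)) hab
    simpa only [inner_add_left, real_inner_smul_left, inner_polarPoint, inner_zero_left, mul_one]
      using this
  have ha := test (θ₂ - π / 2)
  have hb := test (θ₁ - π / 2)
  simp only [sub_sub_cancel, ← sub_add, zero_add, cos_pi_div_two, cos_add_pi_div_two,
    mul_zero, add_zero] at ha hb
  rw [← neg_sub θ₂ θ₁, sin_neg, neg_neg] at ha
  constructor
  · simpa [h₁, hθ] using ha
  · simpa [h₂, hθ] using hb

lemma interior_convexHull_insert_zero_nonempty {S : Set E2} {p q : E2} (hp : p ∈ S) (hq : q ∈ S)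
    (hpq : LinearIndependent ℝ ![p, q]) : (interior (convexHull ℝ (insert 0 S))).Nonempty := by
  rw [interior_convexHull_nonempty_iff_affineSpan_eq_top, ← AffineSubspace.coe_eq_univ_iff,
    affineSpan_insert_zero, ← Submodule.top_coe (R := ℝ), SetLike.coe_set_eq, eq_top_iff,
    ← hpq.span_eq_top_of_card_eq_finrank' (by simp)]
  exact Submodule.span_mono (by simp [insert_subset_iff, hp, hq])

/-- The normal direction `α` of the chord between two points of the plane. -/
lemma exists_chord_normal (h₁ : 0 < r₁) (h₂ : 0 < r₂) (hlt : θ₁ < θ₂) (hπ : θ₂ < θ₁ + π) :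
    ∃ α ∈ Ioo (θ₂ - π / 2) (θ₁ + π / 2), r₁ * cos (θ₁ - α) = r₂ * cos (θ₂ - α) := by
  have hsin : 0 < sin (θ₂ - θ₁) := sin_pos_of_pos_of_lt_pi (by linarith) (by linarith)
  let F (α : ℝ) : ℝ := r₁ * cos (θ₁ - α) - r₂ * cos (θ₂ - α)
  have hleft : F (θ₂ - π / 2) = r₁ * sin (θ₂ - θ₁) := by
    simp only [F]
    rw [show θ₁ - (θ₂ - π / 2) = π / 2 - (θ₂ - θ₁) by ring, cos_pi_div_two_sub, sub_sub_cancel,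
      cos_pi_div_two, mul_zero, sub_zero]
  have hright : F (θ₁ + π / 2) = -(r₂ * sin (θ₂ - θ₁)) := by
    simp only [F]
    rw [sub_add_cancel_left, cos_neg, cos_pi_div_two, ← sub_sub, cos_sub_pi_div_two, mul_zero,
      zero_sub]
  obtain ⟨α, hα, h0⟩ := intermediate_value_Ioo' (f := F) (by linarith : θ₂ - π / 2 ≤ θ₁ + π / 2)
    (by fun_prop) (show (0 : ℝ) ∈ Ioo (F (θ₁ + π / 2)) (F (θ₂ - π / 2)) by
      rw [hleft, hright]
      exact ⟨neg_lt_zero.2 (mul_pos h₂ hsin), mul_pos h₁ hsin⟩)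
  exact ⟨α, hα, sub_eq_zero.1 h0⟩

end PolarCoordinates

section Unfolding

lemma exists_sq_le_two_mul_one_sub_cos {k : ℝ} (hk : 1 < k) :
    ∃ δ > 0, ∀ u : ℝ, |u| ≤ δ → u ^ 2 ≤ k ^ 2 * (2 * (1 - cos u)) := by
  have hk2 : 1 < k ^ 2 := one_lt_pow₀ hk two_ne_zero
  have hpos : 0 < 1 - (k ^ 2)⁻¹ := sub_pos.2 (inv_lt_one_of_one_lt₀ hk2)
  refine ⟨√(1 - (k ^ 2)⁻¹), sqrt_pos.2 hpos, fun u hu => ?_⟩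
  have hu2 : u ^ 2 ≤ 1 - (k ^ 2)⁻¹ := by
    rw [← sq_abs, ← sq_sqrt hpos.le]
    exact pow_le_pow_left₀ (abs_nonneg u) hu 2
  have hu1 : |u| ≤ 1 := hu.trans (sqrt_le_one.2 (by linarith [inv_pos.2 (one_pos.trans hk2)]))
  have htaylor : u ^ 2 * (1 - u ^ 2) ≤ 2 * (1 - cos u) := by
    have hcos := (abs_le.1 (cos_bound hu1)).2
    have h4 : |u| ^ 4 = (u ^ 2) ^ 2 := by rw [← sq_abs u, ← pow_mul]
    rw [h4] at hcos
    nlinarith [sq_nonneg (u ^ 2)]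
  calc u ^ 2 = k ^ 2 * (u ^ 2 * (k ^ 2)⁻¹) := by field_simp
    _ ≤ k ^ 2 * (u ^ 2 * (1 - u ^ 2)) := by
        gcongr
        linarith
    _ ≤ k ^ 2 * (2 * (1 - cos u)) := by gcongr

variable {E : Type*} [NormedAddCommGroup E] [InnerProductSpace ℝ E] {f : ℝ → E} {m : ℝ}

/-- The unfolding of a curve defined on the whole line, with polar angle `0` at time `0`. -/
def coneUnfolding (f : ℝ → E) (t : ℝ) : E2 := polarPoint ‖f t‖ (polarAngle f t)

lemma incrementsLeOn_coneUnfolding (hf : IncrementsLeOn f (fun t => t) univ) (hm : 0 < m)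
    (hr : ∀ t, m ≤ ‖f t‖) : IncrementsLeOn (coneUnfolding f) (fun t => t) univ := by
  have hv := (incrementsLeOn_radialProj hf hm hr).locallyBoundedVariationOn
  refine .of_forall_one_lt fun k hk => ?_
  have hδ : (k + 1) * ((k - 1) * m / (k + 1)) = (k - 1) * m := by field_simp
  set δ := (k - 1) * m / (k + 1)
  have hδ0 : 0 < δ := pos_of_mul_pos_right (hδ ▸ mul_pos (sub_pos.2 hk) hm) (by linarith)
  refine .of_local hδ0 ordConnected_univ fun x _ y _ hxy hyδ => ?_
  have hmx := mul_le_mul_of_nonneg_left (hr x) (sub_pos.2 hk).le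
  have close {t : ℝ} (ht : t ∈ Icc x y) : |‖f x‖ - ‖f t‖| ≤ δ := by
    refine (abs_norm_sub_norm_le _ _).trans ?_
    rw [← dist_eq_norm]
    exact (hf (mem_univ x) (mem_univ t) ht.1).trans (by linarith [ht.2])
  have hx : ‖f x‖ ≤ k * (‖f x‖ - δ) := by linarith
  have hy : ‖f y‖ ≤ k * (‖f x‖ - δ) := by
    linarith [(abs_le.1 (close (right_mem_Icc.2 hxy))).1]
  have hμ : 0 < ‖f x‖ - δ := pos_of_mul_pos_right (hm.trans_le ((hr x).trans hx)) (by linarith)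
  have key := sq_norm_sub_norm_add_sq_polarAngle_sub_le hf hv hμ
    (fun t ht => by linarith [(abs_le.1 (close ht)).2]) hxy
  rw [← mul_sub]
  refine (abs_le_of_sq_le_sq' ?_ (mul_nonneg (by linarith) (sub_nonneg.2 hxy))).2
  calc dist (coneUnfolding f x) (coneUnfolding f y) ^ 2
      ≤ (‖f x‖ - ‖f y‖) ^ 2 + ‖f x‖ * ‖f y‖ * (polarAngle f x - polarAngle f y) ^ 2 :=
        dist_polarPoint_sq_le (by positivity)
    _ ≤ k ^ 2 * (‖f x‖ - ‖f y‖) ^ 2 + (k * (‖f x‖ - δ)) * (k * (‖f x‖ - δ)) *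
          (polarAngle f x - polarAngle f y) ^ 2 := by
        gcongr
        exact le_mul_of_one_le_left (sq_nonneg _) (one_le_pow₀ hk.le)
    _ = k ^ 2 * ((‖f y‖ - ‖f x‖) ^ 2 +
          ((‖f x‖ - δ) * (polarAngle f y - polarAngle f x)) ^ 2) := by ring
    _ ≤ k ^ 2 * (y - x) ^ 2 := mul_le_mul_of_nonneg_left key (sq_nonneg k)
    _ = (k * (y - x)) ^ 2 := (mul_pow k (y - x) 2).symm

lemma continuous_polarAngle (hf : IncrementsLeOn f (fun t => t) univ) (hm : 0 < m)
    (hr : ∀ t, m ≤ ‖f t‖) : Continuous (polarAngle f) := by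
  have hσ := incrementsLeOn_radialProj hf hm hr
  have hv := hσ.locallyBoundedVariationOn
  refine ((lipschitzWith_iff_incrementsLeOn (K := ⟨m⁻¹, (inv_pos.2 hm).le⟩)).2 ?_).continuous
  intro x _ y _ hxy
  rw [dist_comm, Real.dist_eq, abs_of_nonneg (sub_nonneg.2 (monotone_polarAngle hv hxy))]
  change _ ≤ m⁻¹ * y - m⁻¹ * x
  simpa only [inv_mul_eq_div] using polarAngle_sub_le hv (hσ.mono (subset_univ _)) hxy

/-- Folding a plane curve back onto the cone over `f` does not increase its length. -/
lemma incrementsLeOn_smul_radialProj (hf : IncrementsLeOn f (fun t => t) univ) (hm : 0 < m)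
    (hr : ∀ t, m ≤ ‖f t‖) {S : Set ℝ} (hS : S.OrdConnected) {ρ P : ℝ → ℝ} (hρ : ∀ t ∈ S, 0 ≤ ρ t)
    (hP : IncrementsLeOn (fun t => polarPoint (ρ t) (polarAngle f t)) P S) :
    IncrementsLeOn (fun t => ρ t • radialProj f t) P S := by
  have hσ := incrementsLeOn_radialProj hf hm hr
  have hv := hσ.locallyBoundedVariationOn
  refine .of_forall_one_lt fun k hk => ?_
  obtain ⟨δ, hδ, hcos⟩ := exists_sq_le_two_mul_one_sub_cos hk
  refine .of_local (mul_pos hδ hm) hS fun x hx y hy hxy hyδ => ?_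
  have h0 (t : ℝ) : f t ≠ 0 := norm_pos_iff.1 (hm.trans_le (hr t))
  have hangle : |polarAngle f x - polarAngle f y| ≤ δ := by
    rw [abs_sub_comm, abs_of_nonneg (sub_nonneg.2 (monotone_polarAngle hv hxy))]
    refine (polarAngle_sub_le hv (hσ.mono (subset_univ _)) hxy).trans ?_
    rwa [← sub_div, div_le_iff₀ hm]
  have hσθ :
      dist (radialProj f x) (radialProj f y) ^ 2 ≤ (polarAngle f x - polarAngle f y) ^ 2 := by
    rw [← neg_sub, neg_sq]
    exact pow_le_pow_left₀ dist_nonneg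
      (incrementsLeOn_polarAngle hv (mem_univ x) (mem_univ y) hxy) 2
  have hk0 : 0 ≤ k := by linarith
  refine le_trans ((sq_le_sq₀ dist_nonneg (mul_nonneg hk0 dist_nonneg)).1 ?_)
    (by simpa only [mul_sub] using mul_le_mul_of_nonneg_left (hP hx hy hxy) hk0)
  have hρρ := mul_nonneg (hρ x hx) (hρ y hy)
  rw [dist_smul_radialProj_sq (h0 x) (h0 y), mul_pow, dist_polarPoint_sq, mul_add]
  refine add_le_add (le_mul_of_one_le_left (sq_nonneg _) (one_le_pow₀ hk.le)) ?_
  rw [mul_left_comm]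
  exact mul_le_mul_of_nonneg_left (hσθ.trans (hcos _ hangle)) hρρ

end Unfolding

section SupportVector

/-- The normal vector `w` of the line `⟪w, ·⟫ = 1` through the point `(r₀, θ₀)` with polar equation
`1 / r = 1 / r₀ * cos (θ - θ₀) + B * sin (θ - θ₀)`. -/
def lineNormal (r₀ θ₀ B : ℝ) : E2 := polarPoint (1 / r₀) θ₀ + polarPoint B (θ₀ + π / 2)

/-- The coefficient `B` for which the line with normal vector `lineNormal r₀ θ₀ B` passes through
the point `(r, θ)`. -/
def polarSlope (r₀ θ₀ r θ : ℝ) : ℝ := (1 / r - 1 / r₀ * cos (θ - θ₀)) / sin (θ - θ₀)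

lemma inner_lineNormal (r₀ θ₀ B r θ : ℝ) : ⟪lineNormal r₀ θ₀ B, polarPoint r θ⟫ =
    r * (1 / r₀ * cos (θ - θ₀) + B * sin (θ - θ₀)) := by
  rw [lineNormal, inner_add_left, inner_polarPoint, inner_polarPoint, add_sub_right_comm,
    cos_add_pi_div_two, ← neg_sub θ, cos_neg, sin_neg]
  ring

lemma inner_lineNormal_self {r₀ : ℝ} (hr₀ : r₀ ≠ 0) (θ₀ B : ℝ) :
    ⟪lineNormal r₀ θ₀ B, polarPoint r₀ θ₀⟫ = 1 := by
  simp [inner_lineNormal, hr₀]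

lemma inner_lineNormal_le_one_of_polarSlope_le {r₀ θ₀ B r θ : ℝ} (hr : 0 < r) (hlt : θ < θ₀)
    (hπ : θ₀ - θ < π) (hB : polarSlope r₀ θ₀ r θ ≤ B) :
    ⟪lineNormal r₀ θ₀ B, polarPoint r θ⟫ ≤ 1 := by
  have hsin : sin (θ - θ₀) < 0 := sin_neg_of_neg_of_neg_pi_lt (sub_neg.2 hlt) (by linarith)
  rw [inner_lineNormal, ← le_div_iff₀' hr, ← le_sub_iff_add_le']
  exact (div_le_iff_of_neg hsin).1 hB

lemma inner_lineNormal_le_one_of_le_polarSlope {r₀ θ₀ B r θ : ℝ} (hr : 0 < r) (hlt : θ₀ < θ)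
    (hπ : θ - θ₀ < π) (hB : B ≤ polarSlope r₀ θ₀ r θ) :
    ⟪lineNormal r₀ θ₀ B, polarPoint r θ⟫ ≤ 1 := by
  have hsin : 0 < sin (θ - θ₀) := sin_pos_of_pos_of_lt_pi (sub_pos.2 hlt) hπ
  rw [inner_lineNormal, ← le_div_iff₀' hr, ← le_sub_iff_add_le']
  exact (le_div_iff₀ hsin).1 hB

lemma polarSlope_le_polarSlope {r₀ r₁ r₂ θ₀ θ₁ θ₂ α : ℝ} (hr₀ : 0 < r₀) (hr₁ : 0 < r₁)
    (hr₂ : 0 < r₂) (h₁ : θ₁ < θ₀) (h₂ : θ₀ < θ₂) (hwin : θ₂ - θ₁ ≤ π / 2)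
    (hα : α ∈ Ioo (θ₂ - π / 2) (θ₁ + π / 2)) (heq : r₁ * cos (θ₁ - α) = r₂ * cos (θ₂ - α))
    (hle : r₁ * cos (θ₁ - α) ≤ r₀ * cos (θ₀ - α)) :
    polarSlope r₀ θ₀ r₁ θ₁ ≤ polarSlope r₀ θ₀ r₂ θ₂ := by
  set k := r₁ * cos (θ₁ - α) with hk
  have hk0 : 0 < k := mul_pos hr₁ (cos_pos_of_mem_Ioo ⟨by linarith [hα.2], by linarith [hα.1]⟩)
  set c := cos (θ₀ - α) / k - 1 / r₀ with hc
  have hc0 : 0 ≤ c := by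
    rw [hc, sub_nonneg, div_le_div_iff₀ hr₀ hk0]
    linarith
  have decompose {r θ : ℝ} (hr : 0 < r) (h : k = r * cos (θ - α)) (hs : sin (θ - θ₀) ≠ 0) :
      polarSlope r₀ θ₀ r θ = cos (θ - θ₀) / sin (θ - θ₀) * c - sin (θ₀ - α) / k := by
    have hinv : 1 / r = cos (θ - α) / k := by
      rw [div_eq_div_iff hr.ne' hk0.ne', h]
      ring
    have hadd : cos (θ - α) = cos (θ - θ₀) * cos (θ₀ - α) - sin (θ - θ₀) * sin (θ₀ - α) := by
      rw [← cos_add]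
      ring_nf
    rw [polarSlope, hinv, hadd, hc]
    field_simp
    ring
  have hs₁ : sin (θ₁ - θ₀) < 0 := sin_neg_of_neg_of_neg_pi_lt (by linarith) (by linarith)
  have hs₂ : 0 < sin (θ₂ - θ₀) := sin_pos_of_pos_of_lt_pi (by linarith) (by linarith)
  have hc₁ : 0 ≤ cos (θ₁ - θ₀) := cos_nonneg_of_mem_Icc ⟨by linarith, by linarith⟩
  have hc₂ : 0 ≤ cos (θ₂ - θ₀) := cos_nonneg_of_mem_Icc ⟨by linarith, by linarith⟩
  rw [decompose hr₁ hk hs₁.ne, decompose hr₂ heq hs₂.ne']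
  refine sub_le_sub_right (mul_le_mul_of_nonneg_right ?_ hc0) _
  exact (div_nonpos_of_nonneg_of_nonpos hc₁ hs₁.le).trans (div_nonneg hc₂ hs₂.le)

lemma exists_support_of_chords {s u τ : ℝ} {r θ : ℝ → ℝ} (hr : ∀ t ∈ Icc s u, 0 < r t)
    (hθ : StrictMonoOn θ (Icc s u)) (hwin : θ u - θ s ≤ π / 2) (hτ : τ ∈ Ioo s u)
    (hchord : ∀ x ∈ Ico s τ, ∀ y ∈ Ioc τ u, ∀ α ∈ Ioo (θ y - π / 2) (θ x + π / 2),
      r x * cos (θ x - α) = r y * cos (θ y - α) →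
      r x * cos (θ x - α) ≤ r τ * cos (θ τ - α)) :
    ∃ w : E2, ⟪w, polarPoint (r τ) (θ τ)⟫ = 1 ∧
      ∀ t ∈ Icc s u, ⟪w, polarPoint (r t) (θ t)⟫ ≤ 1 := by
  have hτ' := Ioo_subset_Icc_self hτ
  have hs := left_mem_Icc.2 (hτ.1.trans hτ.2).le
  have hu := right_mem_Icc.2 (hτ.1.trans hτ.2).le
  have hwindow {x y : ℝ} (hx : x ∈ Icc s u) (hy : y ∈ Icc s u) : θ y - θ x ≤ π / 2 := by
    linarith [hθ.monotoneOn hs hx hx.1, hθ.monotoneOn hy hu hy.2]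
  have slopes (x) (hx : x ∈ Ico s τ) (y) (hy : y ∈ Ioc τ u) :
      polarSlope (r τ) (θ τ) (r x) (θ x) ≤ polarSlope (r τ) (θ τ) (r y) (θ y) := by
    have hx' : x ∈ Icc s u := ⟨hx.1, hx.2.le.trans hτ'.2⟩
    have hy' : y ∈ Icc s u := ⟨hτ'.1.trans hy.1.le, hy.2⟩
    have hxτ := hθ hx' hτ' hx.2
    have hτy := hθ hτ' hy' hy.1
    obtain ⟨α, hα, heq⟩ := exists_chord_normal (hr x hx') (hr y hy') (hxτ.trans hτy)
      (by linarith [hwindow hx' hy', pi_pos])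
    exact polarSlope_le_polarSlope (hr τ hτ') (hr x hx') (hr y hy') hxτ hτy (hwindow hx' hy') hα heq
      (hchord x hx y hy α hα heq)
  obtain ⟨B, hB₁, hB₂⟩ := exists_between_of_forall_le
    ((nonempty_Ico.2 hτ.1).image fun x => polarSlope (r τ) (θ τ) (r x) (θ x))
    ((nonempty_Ioc.2 hτ.2).image fun y => polarSlope (r τ) (θ τ) (r y) (θ y))
    (by rintro _ ⟨x, hx, rfl⟩ _ ⟨y, hy, rfl⟩; exact slopes x hx y hy)
  have hself := inner_lineNormal_self (hr τ hτ').ne' (θ τ) B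
  refine ⟨_, hself, fun t ht => ?_⟩
  rcases lt_trichotomy t τ with hlt | rfl | hlt
  · exact inner_lineNormal_le_one_of_polarSlope_le (hr t ht) (hθ ht hτ' hlt)
      (by linarith [hwindow ht hτ', pi_pos]) (hB₁ (mem_image_of_mem _ ⟨ht.1, hlt⟩))
  · exact hself.le
  · exact inner_lineNormal_le_one_of_le_polarSlope (hr t ht) (hθ hτ' ht hlt)
      (by linarith [hwindow hτ' ht, pi_pos]) (hB₂ (mem_image_of_mem _ ⟨hlt, ht.2⟩))

end SupportVector

namespace IsMinimalLoop

variable {Γ : ℝ → E3} {L : ℝ}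

lemma exists_pos_le_norm (h : IsMinimalLoop Γ L) : ∃ m > 0, ∀ t, m ≤ ‖Γ t‖ := by
  obtain ⟨_, ⟨t₀, rfl⟩, hmin⟩ :=
    (h.periodic.compact_of_continuous h.pos.ne' h.lipschitz.continuous).exists_isMinOn
      (range_nonempty Γ) continuous_norm.continuousOn
  exact ⟨‖Γ t₀‖, norm_pos_iff.2 (h.ne_zero t₀), fun t => hmin (mem_range_self t)⟩

lemma locallyBoundedVariationOn_radialProj (h : IsMinimalLoop Γ L) :
    LocallyBoundedVariationOn (radialProj Γ) univ := by
  obtain ⟨m, hm, hr⟩ := h.exists_pos_le_norm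
  exact (incrementsLeOn_radialProj (h.incrementsLeOn _) hm hr).locallyBoundedVariationOn

lemma monotone_polarAngle (h : IsMinimalLoop Γ L) : Monotone (polarAngle Γ) :=
  _root_.monotone_polarAngle h.locallyBoundedVariationOn_radialProj

lemma continuous_polarAngle (h : IsMinimalLoop Γ L) : Continuous (polarAngle Γ) := by
  obtain ⟨m, hm, hr⟩ := h.exists_pos_le_norm
  exact _root_.continuous_polarAngle (h.incrementsLeOn _) hm hr

lemma continuous_coneUnfolding (h : IsMinimalLoop Γ L) : Continuous (coneUnfolding Γ) :=
  continuous_polarPoint h.lipschitz.continuous.norm h.continuous_polarAngle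

lemma dist_coneUnfolding_le (h : IsMinimalLoop Γ L) {x y : ℝ} (hxy : x ≤ y) :
    dist (coneUnfolding Γ x) (coneUnfolding Γ y) ≤ y - x := by
  obtain ⟨m, hm, hr⟩ := h.exists_pos_le_norm
  exact incrementsLeOn_coneUnfolding (h.incrementsLeOn _) hm hr (mem_univ x) (mem_univ y) hxy

lemma sub_le_of_unfolded_rival (h : IsMinimalLoop Γ L) {s u : ℝ} (hsu : s ≤ u) (hu : u ≤ s + L)
    {ρ P : ℝ → ℝ} (hρc : ContinuousOn ρ (Icc s u)) (hρ : ∀ t ∈ Icc s u, ‖Γ t‖ ≤ ρ t)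
    (hρs : ρ s = ‖Γ s‖) (hρu : ρ u = ‖Γ u‖)
    (hP : IncrementsLeOn (fun t => polarPoint (ρ t) (polarAngle Γ t)) P (Icc s u)) :
    u - s ≤ P u - P s := by
  obtain ⟨m, hm, hr⟩ := h.exists_pos_le_norm
  have hfold := incrementsLeOn_smul_radialProj (h.incrementsLeOn _) hm hr ordConnected_Icc
    (fun t ht => (norm_nonneg _).trans (hρ t ht)) hP
  have hle := h.le_of_outward_of_incrementsLeOn (β := fun t => ρ t • radialProj Γ t) hsu le_rfl hu
    (hρc.smul (continuous_radialProj h.lipschitz.continuous h.ne_zero).continuousOn)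
    (fun t ht => ⟨ρ t * ‖Γ t‖⁻¹, ?_, smul_smul _ _ _⟩)
    (by rw [hρs, norm_smul_radialProj (h.ne_zero s)])
    (by rw [hρu, norm_smul_radialProj (h.ne_zero u)]) hfold
    (hfold.mono (Icc_subset_Icc_left hsu))
  · simpa using hle
  · rw [← div_eq_mul_inv, one_le_div (norm_pos_iff.2 (h.ne_zero t))]
    exact hρ t ht

lemma norm_eq_of_radial (h : IsMinimalLoop Γ L) {s u : ℝ} (hsu : s ≤ u) (hu : u ≤ s + L)
    (hθ : polarAngle Γ u = polarAngle Γ s) (hmax : ∀ t ∈ Icc s u, ‖Γ t‖ ≤ ‖Γ u‖) :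
    ‖Γ u‖ = ‖Γ s‖ + (u - s) := by
  have norm_le {x y : ℝ} (hxy : x ≤ y) : ‖Γ y‖ ≤ ‖Γ x‖ + (y - x) := by
    linarith [(norm_sub_norm_le (Γ y) (Γ x)).trans (dist_eq_norm' (Γ x) (Γ y) ▸ h.dist_le hxy)]
  let ρ (t : ℝ) : ℝ := min ‖Γ u‖ (‖Γ s‖ + (t - s))
  have hρs : ρ s = ‖Γ s‖ := by simpa [ρ] using hmax s (left_mem_Icc.2 hsu)
  have hρu : ρ u = ‖Γ u‖ := min_eq_left (norm_le hsu)
  have hθ_const {t : ℝ} (ht : t ∈ Icc s u) : polarAngle Γ t = polarAngle Γ s :=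
    le_antisymm (hθ ▸ h.monotone_polarAngle ht.2) (h.monotone_polarAngle ht.1)
  have hP : IncrementsLeOn (fun t => polarPoint (ρ t) (polarAngle Γ t)) ρ (Icc s u) := by
    intro x hx y hy hxy
    have hρxy : ρ x ≤ ρ y := by simp only [ρ]; gcongr
    refine (abs_le_of_sq_le_sq' ?_ (sub_nonneg.2 hρxy)).2
    rw [dist_polarPoint_sq, hθ_const hx, hθ_const hy, sub_self, cos_zero]
    exact le_of_eq (by ring)
  refine le_antisymm (norm_le hsu) ?_
  linarith [h.sub_le_of_unfolded_rival hsu hu (by fun_prop)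
    (fun t ht => le_min (hmax t ht) (norm_le ht.1)) hρs hρu hP]

/-- By concavity of `‖Γ‖ ^ 2 - t ^ 2`, a radial arc would extend backwards to the origin. -/
lemma not_radial (h : IsMinimalLoop Γ L) {s u : ℝ} (hsu : s < u) (hu : u ≤ s + L)
    (hθ : polarAngle Γ u = polarAngle Γ s) (hmax : ∀ t ∈ Icc s u, ‖Γ t‖ ≤ ‖Γ u‖) : False := by
  have hgrow := h.norm_eq_of_radial hsu.le hu hθ hmax
  have hconc := h.concaveOn_norm_sq_sub_sq (u - L)
  rw [sub_add_cancel] at hconc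
  have hback {t : ℝ} (ht : u - L ≤ t) (hts : t ≤ s) : ‖Γ t‖ ^ 2 ≤ (‖Γ s‖ - (s - t)) ^ 2 := by
    rcases hts.eq_or_lt with rfl | hts
    · simp
    have hslope := hconc.slope_anti_adjacent ⟨ht, (hts.trans hsu).le⟩
      (right_mem_Icc.2 (by linarith [h.pos])) hts hsu
    rw [hgrow, show (‖Γ s‖ + (u - s)) ^ 2 - u ^ 2 - (‖Γ s‖ ^ 2 - s ^ 2) =
      2 * (‖Γ s‖ - s) * (u - s) by ring, mul_div_cancel_right₀ _ (sub_pos.2 hsu).ne',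
      le_div_iff₀ (sub_pos.2 hts)] at hslope
    linarith
  have hperiod := hback le_rfl (by linarith)
  rw [h.periodic.sub_eq, hgrow] at hperiod
  have hfar : u - L ≤ s - ‖Γ s‖ := by
    have := h.pos
    have := norm_nonneg (Γ s)
    nlinarith
  have hzero := hback hfar (by linarith [norm_nonneg (Γ s)])
  rw [sub_sub_cancel, sub_self, zero_pow two_ne_zero] at hzero
  exact h.ne_zero _ (norm_eq_zero.1 (sq_eq_zero_iff.1 (hzero.antisymm (sq_nonneg _))))

lemma strictMono_polarAngle (h : IsMinimalLoop Γ L) : StrictMono (polarAngle Γ) := by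
  refine h.monotone_polarAngle.strictMono_of_injective (Function.Injective.of_lt_imp_ne ?_)
  intro x y hxy hθ
  have hxu : x < min y (x + L) := lt_min hxy (lt_add_of_pos_right x h.pos)
  set u := min y (x + L)
  have hθ_const {t : ℝ} (hxt : x ≤ t) (htu : t ≤ u) : polarAngle Γ t = polarAngle Γ x :=
    le_antisymm (hθ ▸ h.monotone_polarAngle (htu.trans (min_le_left _ _)))
      (h.monotone_polarAngle hxt)
  obtain ⟨v, ⟨hxv, hvu⟩, hmax⟩ := isCompact_Icc.exists_isMaxOn (nonempty_Icc.2 hxu.le)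
    h.lipschitz.continuous.norm.continuousOn
  rcases hxv.eq_or_lt with rfl | hlt
  · refine h.reverse.not_radial (neg_lt_neg hxu) (by linarith [min_le_right y (x + L)]) ?_ ?_
    · simp only [polarAngle_comp_neg, neg_neg, hθ_const hxu.le le_rfl]
    · simp only [neg_neg]
      exact fun t ht => hmax ⟨le_neg.1 ht.2, neg_le.1 ht.1⟩
  · exact h.not_radial hlt (hvu.trans (min_le_right _ _)) (hθ_const hxv hvu)
      fun t ht => hmax ⟨ht.1, ht.2.trans hvu⟩

end IsMinimalLoop

section Excursion

variable {f : ℝ → ℝ} {x y τ h : ℝ}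

lemma exists_eq_forall_Icc_le_left (hf : Continuous f) (hx : x ≤ τ) (hfx : h ≤ f x)
    (hfτ : f τ ≤ h) : ∃ s ∈ Icc x τ, f s = h ∧ ∀ t ∈ Icc s τ, f t ≤ h := by
  obtain ⟨s, ⟨hs, hfs⟩, hlast⟩ :=
    (isCompact_Icc.inter_right (isClosed_singleton.preimage hf)).exists_isGreatest
      (intermediate_value_Icc' hx hf.continuousOn ⟨hfτ, hfx⟩)
  refine ⟨s, hs, hfs, fun t ht => le_of_not_gt fun hlt => ?_⟩
  obtain ⟨t', ht', hft'⟩ := intermediate_value_Icc' ht.2 hf.continuousOn ⟨hfτ, hlt.le⟩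
  have hts : t' = s :=
    (hlast ⟨⟨hs.1.trans (ht.1.trans ht'.1), ht'.2⟩, hft'⟩).antisymm (ht.1.trans ht'.1)
  have : t = s := (ht'.1.trans_eq hts).antisymm ht.1
  exact hlt.ne' (this ▸ hfs)

lemma exists_Icc_eq_forall_le (hf : Continuous f) (hx : x ≤ τ) (hy : τ ≤ y) (hfx : h ≤ f x)
    (hfτ : f τ ≤ h) (hfy : h ≤ f y) :
    ∃ s ∈ Icc x τ, ∃ u ∈ Icc τ y, f s = h ∧ f u = h ∧ ∀ t ∈ Icc s u, f t ≤ h := by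
  obtain ⟨s, hs, hfs, hle⟩ := exists_eq_forall_Icc_le_left hf hx hfx hfτ
  obtain ⟨v, hv, hfv, hle'⟩ := exists_eq_forall_Icc_le_left (f := fun t => f (-t)) (h := h)
    (by fun_prop) (neg_le_neg hy) (by rwa [neg_neg]) (by rwa [neg_neg])
  refine ⟨s, hs, -v, ⟨le_neg.1 hv.2, neg_le.1 hv.1⟩, hfs, hfv, fun t ht => ?_⟩
  rcases le_total t τ with htτ | hτt
  · exact hle t ⟨ht.1, htτ⟩
  · simpa only [neg_neg] using hle' (-t) ⟨le_neg.1 ht.2, neg_le_neg hτt⟩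

end Excursion

section UnfoldedHeight

variable {E : Type*} [NormedAddCommGroup E] [InnerProductSpace ℝ E]

/-- The height of the unfolding above the line through the origin orthogonal to the direction with
polar angle `α`. -/
def unfoldedHeight (f : ℝ → E) (α t : ℝ) : ℝ := ‖f t‖ * cos (polarAngle f t - α)

lemma inner_coneUnfolding (f : ℝ → E) (α t : ℝ) :
    ⟪polarPoint 1 α, coneUnfolding f t⟫ = unfoldedHeight f α t := by
  rw [coneUnfolding, real_inner_comm, inner_polarPoint, mul_one, unfoldedHeight]

end UnfoldedHeight

namespace IsMinimalLoop

variable {Γ : ℝ → E3} {L s u x y τ α k : ℝ}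

lemma continuous_unfoldedHeight (h : IsMinimalLoop Γ L) (α : ℝ) :
    Continuous (unfoldedHeight Γ α) :=
  h.lipschitz.continuous.norm.mul
    (continuous_cos.comp (h.continuous_polarAngle.sub continuous_const))

lemma sub_le_dist_coneUnfolding (h : IsMinimalLoop Γ L) (hsu : s ≤ u) (hu : u ≤ s + L)
    (hα : α ∈ Ioo (polarAngle Γ u - π / 2) (polarAngle Γ s + π / 2))
    (hs : unfoldedHeight Γ α s = k) (hu' : unfoldedHeight Γ α u = k)
    (hle : ∀ t ∈ Icc s u, unfoldedHeight Γ α t ≤ k) :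
    u - s ≤ dist (coneUnfolding Γ s) (coneUnfolding Γ u) := by
  have hangle {t : ℝ} (ht : t ∈ Icc s u) : polarAngle Γ t - α ∈ Ioo (-(π / 2)) (π / 2) :=
    ⟨by linarith [hα.2, h.monotone_polarAngle ht.1], by linarith [hα.1, h.monotone_polarAngle ht.2]⟩
  have hcos {t : ℝ} (ht : t ∈ Icc s u) : 0 < cos (polarAngle Γ t - α) :=
    cos_pos_of_mem_Ioo (hangle ht)
  have hsm := left_mem_Icc.2 hsu
  have hum := right_mem_Icc.2 hsu
  have hk : 0 ≤ k := hs ▸ mul_nonneg (norm_nonneg _) (hcos hsm).le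
  have hdist {x y : ℝ} (hx : x ∈ Icc s u) (hy : y ∈ Icc s u) (hxy : x ≤ y) :=
    dist_polarPoint_div_cos hk (hcos hx) (hcos hy)
      (strictMonoOn_tan.monotoneOn (hangle hx) (hangle hy)
        (sub_le_sub_right (h.monotone_polarAngle hxy) α))
  have hρ {t : ℝ} (ht : t ∈ Icc s u) (hkt : unfoldedHeight Γ α t = k) :
      k / cos (polarAngle Γ t - α) = ‖Γ t‖ := by
    rw [← hkt, unfoldedHeight, mul_div_cancel_right₀ _ (hcos ht).ne']
  have hrival := h.sub_le_of_unfolded_rival hsu hu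
    (continuousOn_const.div
      (continuous_cos.comp (h.continuous_polarAngle.sub continuous_const)).continuousOn
      fun t ht => (hcos ht).ne')
    (fun t ht => (le_div_iff₀ (hcos ht)).2 (hle t ht)) (hρ hsm hs) (hρ hum hu')
    fun x hx y hy hxy => (hdist hx hy hxy).le
  rwa [← hdist hsm hum hsu, hρ hsm hs, hρ hum hu'] at hrival

/-- By minimality the chord is no shorter than the arc of `Γ` it replaces, so it is the unfolded
arc. -/
lemma unfoldedHeight_eq_of_forall_le (h : IsMinimalLoop Γ L) (hu : u ≤ s + L)
    (hα : α ∈ Ioo (polarAngle Γ u - π / 2) (polarAngle Γ s + π / 2))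
    (hs : unfoldedHeight Γ α s = k) (hu' : unfoldedHeight Γ α u = k)
    (hle : ∀ t ∈ Icc s u, unfoldedHeight Γ α t ≤ k) (hτ : τ ∈ Icc s u) :
    unfoldedHeight Γ α τ = k := by
  have hchord : Wbtw ℝ (coneUnfolding Γ s) (coneUnfolding Γ τ) (coneUnfolding Γ u) := by
    refine dist_add_dist_eq_iff.1 (le_antisymm ?_ (dist_triangle _ _ _))
    linarith [h.sub_le_dist_coneUnfolding (hτ.1.trans hτ.2) hu hα hs hu' hle,
      h.dist_coneUnfolding_le hτ.1, h.dist_coneUnfolding_le hτ.2]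
  obtain ⟨c, -, hc⟩ := hchord
  rw [← inner_coneUnfolding, ← hc, AffineMap.lineMap_apply_module, inner_add_right,
    real_inner_smul_right, real_inner_smul_right, inner_coneUnfolding, inner_coneUnfolding, hs, hu']
  ring

lemma unfoldedHeight_le_of_chord (h : IsMinimalLoop Γ L) (hτ : τ ∈ Icc x y) (hy : y ≤ x + L)
    (hα : α ∈ Ioo (polarAngle Γ y - π / 2) (polarAngle Γ x + π / 2))
    (hxy : unfoldedHeight Γ α x = unfoldedHeight Γ α y) :
    unfoldedHeight Γ α x ≤ unfoldedHeight Γ α τ := by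
  by_contra! hlt
  obtain ⟨s, hs, u, hu, hfs, hfu, hle⟩ := exists_Icc_eq_forall_le (h.continuous_unfoldedHeight α)
    hτ.1 hτ.2 le_rfl hlt.le hxy.le
  refine hlt.ne (h.unfoldedHeight_eq_of_forall_le (by linarith [hs.1, hu.2]) ⟨?_, ?_⟩ hfs hfu hle
    ⟨hs.2, hu.1⟩)
  · linarith [hα.1, h.monotone_polarAngle hu.2]
  · linarith [hα.2, h.monotone_polarAngle hs.1]

end IsMinimalLoop

lemma mem_frontier_of_inner_le {E : Type*} [NormedAddCommGroup E] [InnerProductSpace ℝ E]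
    {K : Set E} {p w : E} (hpK : p ∈ K) (hp : ⟪w, p⟫ ≠ 0) (hle : ∀ q ∈ K, ⟪w, q⟫ ≤ ⟪w, p⟫) :
    p ∈ frontier K := by
  refine ⟨subset_closure hpK, fun hint => hp ?_⟩
  have hmax : IsLocalMax (innerSL ℝ w) p :=
    Filter.mem_of_superset (mem_interior_iff_mem_nhds.1 hint) hle
  exact DFunLike.congr_fun (hmax.hasFDerivAt_eq_zero (innerSL ℝ w).hasFDerivAt) p

lemma isLocallyConvexWrtO_of_forall_window {β : ℝ → E2} (hβ : Continuous β)
    (hwindow : ∀ t, ∃ s u, t ∈ Ioo s u ∧ InjOn β (Ioo s u) ∧ LinearIndependent ℝ ![β s, β u] ∧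
      ∀ τ ∈ Ioo s u, ∃ w : E2, ⟪w, β τ⟫ = 1 ∧ ∀ v ∈ Icc s u, ⟪w, β v⟫ ≤ 1) (a b : ℝ) :
    IsLocallyConvexWrtO a b β := by
  have hnhds {s u t : ℝ} (ht : t ∈ Ioo s u) : Ioo s u ∈ nhdsWithin t (Icc a b) :=
    mem_nhdsWithin_of_mem_nhds (Ioo_mem_nhds ht.1 ht.2)
  refine ⟨fun t _ => ?_, fun t _ => ?_, fun t _ => ?_⟩ <;>
    obtain ⟨s, u, ht, hinj, hind, hsupp⟩ := hwindow t
  · exact ⟨_, hnhds ht, hinj⟩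
  · have hsu : s ≤ u := (ht.1.trans ht.2).le
    refine ⟨_, hnhds ht, convexHull ℝ (insert 0 (β '' Icc s u)), convex_convexHull ℝ _,
      isCompact_convexHull ((isCompact_Icc.image hβ).insert 0),
      interior_convexHull_insert_zero_nonempty (mem_image_of_mem β (left_mem_Icc.2 hsu))
        (mem_image_of_mem β (right_mem_Icc.2 hsu)) hind, ?_⟩
    rintro _ ⟨τ, hτ, rfl⟩
    obtain ⟨w, hw, hle⟩ := hsupp τ hτ
    have hhull : convexHull ℝ (insert 0 (β '' Icc s u)) ⊆ {q | ⟪w, q⟫ ≤ 1} := by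
      refine convexHull_min (insert_subset ?_ ?_)
        (convex_halfSpace_le (innerSL ℝ w).isLinear 1)
      · simp only [mem_ofPred_eq, inner_zero_right, zero_le_one]
      · rintro _ ⟨v, hv, rfl⟩
        exact hle v hv
    exact mem_frontier_of_inner_le (subset_convexHull ℝ _
      (mem_insert_of_mem _ (mem_image_of_mem β (Ioo_subset_Icc_self hτ)))) (hw ▸ one_ne_zero)
      fun q hq => hw ▸ hhull hq
  · obtain ⟨w, hw, hle⟩ := hsupp t ht
    exact ⟨w, 1, one_pos, hw, _, hnhds ht, fun v hv => hle v (Ioo_subset_Icc_self hv)⟩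

namespace IsMinimalLoop

variable {Γ : ℝ → E3} {L : ℝ}

lemma exists_window (h : IsMinimalLoop Γ L) (t : ℝ) :
    ∃ s u, t ∈ Ioo s u ∧ u ≤ s + L ∧ polarAngle Γ u - polarAngle Γ s ≤ π / 2 := by
  obtain ⟨m, hm, hr⟩ := h.exists_pos_le_norm
  have hδ : 0 < min (L / 2) (m / 2) := lt_min (half_pos h.pos) (half_pos hm)
  set δ := min (L / 2) (m / 2)
  have hδL : δ ≤ L / 2 := min_le_left _ _
  have hδm : δ ≤ m / 2 := min_le_right _ _
  refine ⟨t - δ, t + δ, ⟨sub_lt_self t hδ, lt_add_of_pos_right t hδ⟩, by linarith, ?_⟩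
  calc polarAngle Γ (t + δ) - polarAngle Γ (t - δ) ≤ (t + δ) / m - (t - δ) / m :=
        polarAngle_sub_le h.locallyBoundedVariationOn_radialProj
          ((incrementsLeOn_radialProj (h.incrementsLeOn _) hm hr).mono (subset_univ _))
          (by linarith)
    _ ≤ 1 := by
        rw [← sub_div, div_le_one hm]
        linarith
    _ ≤ π / 2 := one_le_pi_div_two

lemma isLocallyConvexWrtO_coneUnfolding (h : IsMinimalLoop Γ L) (a b : ℝ) :
    IsLocallyConvexWrtO a b (coneUnfolding Γ) := by
  have hr (t : ℝ) : 0 < ‖Γ t‖ := norm_pos_iff.2 (h.ne_zero t)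
  refine isLocallyConvexWrtO_of_forall_window h.continuous_coneUnfolding (fun t => ?_) a b
  obtain ⟨s, u, ht, hu, hwin⟩ := h.exists_window t
  refine ⟨s, u, ht, fun x hx y hy hxy => ?_, ?_, fun τ hτ => ?_⟩
  · refine h.strictMono_polarAngle.injective (angle_eq_of_polarPoint_eq (hr x) (hr y) ?_ hxy)
    have := pi_pos
    rw [abs_lt]
    constructor <;> linarith [h.monotone_polarAngle hx.1.le, h.monotone_polarAngle hx.2.le,
      h.monotone_polarAngle hy.1.le, h.monotone_polarAngle hy.2.le]
  · refine linearIndependent_polarPoint (hr s).ne' (hr u).ne' (sin_pos_of_pos_of_lt_pi ?_ ?_).ne'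
    · exact sub_pos.2 (h.strictMono_polarAngle (ht.1.trans ht.2))
    · linarith [pi_pos]
  · exact exists_support_of_chords (fun t _ => hr t) (h.strictMono_polarAngle.strictMonoOn _)
      hwin hτ fun x hx y hy α hα hxy => h.unfoldedHeight_le_of_chord ⟨hx.2.le, hy.1.le⟩
        (by linarith [hx.1, hy.2]) hα hxy

end IsMinimalLoop

lemma IncrementsLeOn.of_periodic {E : Type*} [PseudoMetricSpace E] {f : ℝ → E} {T : ℝ}
    (hf : Function.Periodic f T) (hT : 0 < T) (h : IncrementsLeOn f (fun t => t) (Icc 0 T)) :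
    IncrementsLeOn f (fun t => t) univ := by
  refine .of_local hT ordConnected_univ fun x _ y _ hxy hyT => ?_
  obtain ⟨n, ⟨hx0, hxT⟩, -⟩ := existsUnique_sub_zsmul_mem_Ico hT x 0
  rw [← hf.sub_zsmul_eq (x := x) n, ← hf.sub_zsmul_eq (x := y) n,
    ← sub_sub_sub_cancel_right y x (n • T)]
  have hxy' : x - n • T ≤ y - n • T := sub_le_sub_right hxy _
  have hyx : y - n • T ≤ x - n • T + T := by linarith
  generalize x - n • T = x', y - n • T = y' at *
  rw [zero_add] at hxT
  rcases le_total y' T with hy | hy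
  · exact h ⟨hx0, hxT.le⟩ ⟨hx0.trans hxy', hy⟩ hxy'
  have hstart := h ⟨hx0, hxT.le⟩ (right_mem_Icc.2 hT.le) hxT.le
  have hend := h (left_mem_Icc.2 hT.le) ⟨sub_nonneg.2 hy, by linarith⟩ (sub_nonneg.2 hy)
  rw [← hf.eq, hf.sub_eq] at hend
  linarith [dist_triangle (f x') (f T) (f y')]

section ArclengthLoop

/-- The closed curve `γ : [a, b] → E`, of constant speed `C`, reparametrized by arclength and
extended periodically to `ℝ`. -/
def arclengthLoop {E : Type*} (a b : ℝ) (γ : ℝ → E) (C : ℝ≥0) (t : ℝ) : E :=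
  γ (a + (b - a) * Int.fract (t / (C * (b - a))))

lemma periodic_arclengthLoop {E : Type*} {a b : ℝ} (γ : ℝ → E) {C : ℝ≥0} (hC : 0 < C)
    (hab : a < b) : Function.Periodic (arclengthLoop a b γ C) (C * (b - a)) := by
  intro t
  have hL : (C : ℝ) * (b - a) ≠ 0 := (mul_pos (NNReal.coe_pos.2 hC) (sub_pos.2 hab)).ne'
  rw [arclengthLoop, arclengthLoop, add_div, div_self hL, Int.fract_add_one]

lemma arclengthLoop_mul_sub {E : Type*} {a b t : ℝ} {γ : ℝ → E} {C : ℝ≥0} (hC : 0 < C)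
    (hab : a < b) (hclosed : γ a = γ b) (ht : t ∈ Icc a b) :
    arclengthLoop a b γ C (C * (t - a)) = γ t := by
  rw [arclengthLoop, mul_div_mul_left _ _ (NNReal.coe_pos.2 hC).ne']
  rcases ht.2.eq_or_lt with rfl | hlt
  · rw [div_self (sub_pos.2 hab).ne', Int.fract_one, mul_zero, add_zero, hclosed]
  · rw [Int.fract_eq_self.2 ⟨div_nonneg (sub_nonneg.2 ht.1) (sub_pos.2 hab).le,
      (div_lt_one (sub_pos.2 hab)).2 (sub_lt_sub_right hlt a)⟩,
      mul_div_cancel₀ _ (sub_pos.2 hab).ne', add_sub_cancel]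

lemma IncrementsLeOn.of_hasConstantSpeedOnWith {E : Type*} [PseudoMetricSpace E] {a b : ℝ}
    {γ : ℝ → E} {C : ℝ≥0} (h : HasConstantSpeedOnWith γ (Icc a b) C) :
    IncrementsLeOn γ (fun t => C * t) (Icc a b) := by
  intro x hx y hy hxy
  rw [← mul_sub, ← ENNReal.ofReal_le_ofReal_iff (mul_nonneg C.coe_nonneg (sub_nonneg.2 hxy)),
    ← edist_dist, ← h hx hy]
  exact eVariationOn.edist_le γ ⟨hx, left_mem_Icc.2 hxy⟩ ⟨hy, right_mem_Icc.2 hxy⟩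

lemma image_mul_sub_Icc {c : ℝ} (hc : 0 < c) (a x y : ℝ) :
    (fun t => c * (t - a)) '' Icc x y = Icc (c * (x - a)) (c * (y - a)) := by
  rw [← image_mul_left_Icc' hc, ← image_sub_const_Icc, image_image]

lemma incrementsLeOn_arclengthLoop {E : Type*} [PseudoMetricSpace E] {a b : ℝ} {γ : ℝ → E}
    {C : ℝ≥0} (h : HasConstantSpeedOnWith γ (Icc a b) C) (hC : 0 < C) (hab : a < b)
    (hclosed : γ a = γ b) : IncrementsLeOn (arclengthLoop a b γ C) (fun t => t) univ := by
  refine .of_periodic (periodic_arclengthLoop γ hC hab)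
    (mul_pos (NNReal.coe_pos.2 hC) (sub_pos.2 hab)) ?_
  rw [← mul_zero (C : ℝ), ← sub_self a, ← image_mul_sub_Icc (NNReal.coe_pos.2 hC)]
  rintro _ ⟨x, hx, rfl⟩ _ ⟨y, hy, rfl⟩ hxy
  rw [arclengthLoop_mul_sub hC hab hclosed hx, arclengthLoop_mul_sub hC hab hclosed hy]
  exact (IncrementsLeOn.of_hasConstantSpeedOnWith h hx hy (by nlinarith)).trans_eq (by ring)

end ArclengthLoop

namespace IsInspection

variable {a b : ℝ} {γ : ℝ → E3} {C : ℝ≥0}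

lemma exists_one_le_inner (h : IsInspection a b γ) {y : E3} (hy : ‖y‖ = 1) :
    ∃ t ∈ Icc a b, 1 ≤ ⟪γ t, y⟫ := by
  obtain ⟨_, ⟨t, ht, rfl⟩, hle⟩ := exists_one_le_inner_of_sphere_subset_convexHull h.2.2.2.2 hy
  exact ⟨t, ht, hle⟩

lemma speed_pos (h : IsInspection a b γ) (hspeed : HasConstantSpeedOnWith γ (Icc a b) C) :
    0 < C := by
  rw [pos_iff_ne_zero]
  rintro rfl
  obtain ⟨y, hy⟩ := exists_norm_eq E3 zero_le_one
  obtain ⟨s, hs, hsy⟩ := h.exists_one_le_inner hy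
  obtain ⟨t, ht, hty⟩ := h.exists_one_le_inner (y := -y) (by rwa [norm_neg])
  have hconst : γ s = γ t := edist_le_zero.1 <|
    (hasConstantSpeedOnWith_zero_iff.1 hspeed) s hs t ht |>.le
  rw [← hconst, inner_neg_right] at hty
  linarith

end IsInspection

namespace IsMinimalInspection

variable {a b : ℝ} {γ : ℝ → E3} {C : ℝ≥0}

lemma isMinimalLoop_arclengthLoop (h : IsMinimalInspection a b γ)
    (hspeed : HasConstantSpeedOnWith γ (Icc a b) C) :
    IsMinimalLoop (arclengthLoop a b γ C) (C * (b - a)) where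
  pos := mul_pos (NNReal.coe_pos.2 (h.1.speed_pos hspeed)) (sub_pos.2 h.1.1)
  periodic := periodic_arclengthLoop γ (h.1.speed_pos hspeed) h.1.1
  lipschitz := by
    have := incrementsLeOn_arclengthLoop hspeed (h.1.speed_pos hspeed) h.1.1 h.1.2.2.1
    exact lipschitzWith_iff_incrementsLeOn.2 (by simpa using this)
  support y hy := by
    obtain ⟨t, ht, hle⟩ := h.1.exists_one_le_inner hy
    refine ⟨C * (t - a), ?_⟩
    rwa [arclengthLoop_mul_sub (h.1.speed_pos hspeed) h.1.1 h.1.2.2.1 ht]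
  minimal c d β hβ := by
    have hlength := hspeed (left_mem_Icc.2 h.1.1.le) (right_mem_Icc.2 h.1.1.le)
    rw [inter_self] at hlength
    exact hlength ▸ h.2 c d β hβ

end IsMinimalInspection

lemma sphericalArc_eq_polarAngle {a b t : ℝ} {γ Γ : ℝ → E3} {c : ℝ} (hc : 0 < c)
    (hΓ : ∀ s ∈ Icc a b, Γ (c * (s - a)) = γ s) (ht : t ∈ Icc a b) :
    sphericalArc a γ t = polarAngle Γ (c * (t - a)) := by
  have himage := image_mul_sub_Icc hc a a t
  rw [sub_self, mul_zero] at himage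
  rw [sphericalArc, polarAngle,
    variationOnFromTo.eq_of_le _ _ (mul_nonneg hc.le (sub_nonneg.2 ht.1)), univ_inter, ← himage,
    ← eVariationOn.comp_eq_of_monotoneOn (radialProj Γ) (fun s => c * (s - a))
      fun x _ y _ hxy => mul_le_mul_of_nonneg_left (sub_le_sub_right hxy a) hc.le]
  congr 1
  refine eVariationOn.eq_of_eqOn fun s hs => ?_
  rw [Function.comp_apply, radialProj, hΓ s ⟨hs.1, hs.2.trans ht.2⟩]

lemma unfolding_eq_coneUnfolding {a b t : ℝ} {γ Γ : ℝ → E3} {c : ℝ} (hc : 0 < c)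
    (hΓ : ∀ s ∈ Icc a b, Γ (c * (s - a)) = γ s) (ht : t ∈ Icc a b) :
    unfolding a γ t = coneUnfolding Γ (c * (t - a)) := by
  rw [unfolding, coneUnfolding, sphericalArc_eq_polarAngle hc hΓ ht, hΓ t ht]
  rfl

lemma IsLocallyConvexWrtO.of_eqOn_comp {a b c d : ℝ} {β β' : ℝ → E2} {φ : ℝ → ℝ}
    (h : IsLocallyConvexWrtO c d β) (hφ : ContinuousOn φ (Icc a b))
    (hmaps : MapsTo φ (Icc a b) (Icc c d)) (hinj : InjOn φ (Icc a b))
    (heq : EqOn β' (β ∘ φ) (Icc a b)) : IsLocallyConvexWrtO a b β' := by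
  have hnhds {t : ℝ} (ht : t ∈ Icc a b) {U : Set ℝ} (hU : U ∈ nhdsWithin (φ t) (Icc c d)) :
      Icc a b ∩ φ ⁻¹' U ∈ nhdsWithin t (Icc a b) :=
    Filter.inter_mem self_mem_nhdsWithin ((hφ t ht).tendsto_nhdsWithin hmaps hU)
  obtain ⟨hloc, hbody, hsupp⟩ := h
  refine ⟨fun t ht => ?_, fun t ht => ?_, fun t ht => ?_⟩
  · obtain ⟨U, hU, hβ⟩ := hloc (φ t) (hmaps ht)
    refine ⟨_, hnhds ht hU, fun x hx y hy hxy => hinj hx.1 hy.1 (hβ hx.2 hy.2 ?_)⟩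
    rwa [heq hx.1, heq hy.1] at hxy
  · obtain ⟨U, hU, K, hconv, hcomp, hint, hβ⟩ := hbody (φ t) (hmaps ht)
    refine ⟨_, hnhds ht hU, K, hconv, hcomp, hint, ?_⟩
    rintro _ ⟨x, hx, rfl⟩
    exact heq hx.1 ▸ hβ (mem_image_of_mem β hx.2)
  · obtain ⟨u, r, hr, hu, U, hU, hle⟩ := hsupp (φ t) (hmaps ht)
    exact ⟨u, r, hr, heq ht ▸ hu, _, hnhds ht hU, fun x hx => heq hx.1 ▸ hle (φ x) hx.2⟩

/-- **The unfolding of a constant speed minimal inspection curve is locally convex with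
respect to the origin.** -/
theorem minimal_inspection_unfolding_locally_convex
    (a b : ℝ) (γ : ℝ → E3) (C : ℝ≥0)
    (hmin : IsMinimalInspection a b γ)
    (hspeed : HasConstantSpeedOnWith γ (Set.Icc a b) C) :
    IsLocallyConvexWrtO a b (unfolding a γ) := by
  have hC : 0 < (C : ℝ) := hmin.1.speed_pos hspeed
  have hloop := hmin.isMinimalLoop_arclengthLoop hspeed
  refine (hloop.isLocallyConvexWrtO_coneUnfolding 0 (C * (b - a))).of_eqOn_comp
    (φ := fun t => C * (t - a)) (by fun_prop) ?_ ?_ fun t ht =>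
      unfolding_eq_coneUnfolding hC
        (fun s hs => arclengthLoop_mul_sub (hmin.1.speed_pos hspeed) hmin.1.1 hmin.1.2.2.1 hs) ht
  · exact fun t ht => ⟨mul_nonneg hC.le (sub_nonneg.2 ht.1),
      mul_le_mul_of_nonneg_left (sub_le_sub_right ht.2 a) hC.le⟩
  · exact fun x _ y _ hxy => sub_left_injective (mul_left_cancel₀ hC.ne' hxy)
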